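/- arXiv:2508.02615 — 2 statements merged into one kernel-verified Lean document; each statement's English description precedes it below -/
import Mathlib

section
/- Let (E,d_E) be a separable metric space, let p ≥ 1 and let μ ∈ 𝒫_p(E). Then for every β with 0 ≤ β < 1/(2p): limsup_{n→∞} n^β · b_{n,p}(μ) ≤ limsup_{n→∞} n^β · (𝔼[W_p(μ_n,μ)^p])^{1/p} ≤ (10/(1/(2p) − β)) · limsup_{n→∞} n^β · b_{n,p}(μ), where μ_n is the empirical measure of μ with sample size n. -/
open MeasureTheory ENNReal Filter

noncomputable section

/-- The `p`-Wasserstein distance between two measures on a metric space, as an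
extended nonnegative real: the infimum over all couplings `γ` (measures on `E × E`
with the prescribed marginals) of `(∫ d(x,y)^p dγ)^(1/p)`. -/
def Wp {E : Type*} [MetricSpace E] [MeasurableSpace E] (p : ℝ) (μ ν : Measure E) : ℝ≥0∞ :=
  ⨅ γ ∈ {γ : Measure (E × E) | γ.map Prod.fst = μ ∧ γ.map Prod.snd = ν},
    (∫⁻ z, edist z.1 z.2 ^ p ∂γ) ^ (1 / p)

/-- The (uniform) discrete measure `(1/n) ∑ δ_{X i}`. -/
def empiricalMeasure {E : Type*} [MeasurableSpace E] (n : ℕ) (X : Fin n → E) : Measure E :=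
  (n : ℝ≥0∞)⁻¹ • ∑ i, Measure.dirac (X i)

/-- The law of `n` independent samples of `μ`. -/
def sampleMeasure {E : Type*} [MeasurableSpace E] (μ : Measure E) (n : ℕ) :
    Measure (Fin n → E) :=
  Measure.pi fun _ => μ

/-- `𝔼[W_p(μ_n, μ)]`, where `μ_n` is the empirical measure of `μ` with sample size `n`. -/
def expWp {E : Type*} [MetricSpace E] [MeasurableSpace E] (p : ℝ) (μ : Measure E) (n : ℕ) :
    ℝ≥0∞ :=
  ∫⁻ X, Wp p (empiricalMeasure n X) μ ∂(sampleMeasure μ n)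

/-- `(𝔼[W_p(μ_n, μ)^p])^{1/p}`, where `μ_n` is the empirical measure of `μ` with
sample size `n`. -/
def expWpPow {E : Type*} [MetricSpace E] [MeasurableSpace E] (p : ℝ) (μ : Measure E) (n : ℕ) :
    ℝ≥0∞ :=
  (∫⁻ X, (Wp p (empiricalMeasure n X) μ) ^ p ∂(sampleMeasure μ n)) ^ (1 / p)

/-- The optimal uniform quantization error
`b_{n,p}(μ) = inf_{x₁,…,x_n} W_p(μ, (1/n) ∑ δ_{x_i})`. -/
def unifQuantErr {E : Type*} [MetricSpace E] [MeasurableSpace E] (p : ℝ) (n : ℕ)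
    (μ : Measure E) : ℝ≥0∞ :=
  ⨅ x : Fin n → E, Wp p μ (empiricalMeasure n x)

/-- The optimal quantization error `e_{n,p}(μ)`: the infimum of `W_p(μ, ν)` over all
probability measures `ν` supported on at most `n` points. -/
def quantErr {E : Type*} [MetricSpace E] [MeasurableSpace E] (p : ℝ) (n : ℕ)
    (μ : Measure E) : ℝ≥0∞ :=
  ⨅ ν ∈ {ν : Measure E | IsProbabilityMeasure ν ∧
      ∃ S : Finset E, S.card ≤ n ∧ ν (↑S : Set E)ᶜ = 0}, Wp p μ ν

/-- `μ` has a finite `p`-th moment: `∫ d(x, x₀)^p dμ(x) < ∞` for some `x₀`. -/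
def HasFiniteMoment {E : Type*} [MetricSpace E] [MeasurableSpace E] (p : ℝ)
    (μ : Measure E) : Prop :=
  ∃ x₀ : E, ∫⁻ x, edist x x₀ ^ p ∂μ ≠ ∞

end


section helpers
set_option linter.unusedSectionVars false
variable {E : Type*} [MetricSpace E] [TopologicalSpace.SeparableSpace E]
    [MeasurableSpace E] [BorelSpace E]

/-- The discrete measure with weights `w` on `S`. -/
noncomputable def dM {E : Type*} [MeasurableSpace E] (S : Finset E) (w : E → ℝ≥0∞) : Measure E :=
  ∑ s ∈ S, w s • Measure.dirac s

/-- The measure `m ⊗ f` for a finite kernel `f`. -/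
noncomputable def kerM {Ω E : Type*} [MeasurableSpace Ω] [MeasurableSpace E] (m : Measure Ω)
    (S : Finset E) (f : E → Ω → ℝ≥0∞) : Measure (Ω × E) :=
  ∑ s ∈ S, (m.withDensity (f s)).map (fun x => (x, s))

lemma lintegral_dM {E : Type*} [MeasurableSpace E] (S : Finset E) (w : E → ℝ≥0∞)
    {h : E → ℝ≥0∞} (hh : Measurable h) :
    ∫⁻ x, h x ∂(dM S w) = ∑ s ∈ S, w s * h s := by
  simp [dM, lintegral_finsetSum_measure, lintegral_dirac' _ hh]

lemma lintegral_kerM {Ω E : Type*} [MeasurableSpace Ω] [MeasurableSpace E] (m : Measure Ω)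
    (S : Finset E) (f : E → Ω → ℝ≥0∞) (hf : ∀ s, Measurable (f s))
    {h : Ω × E → ℝ≥0∞} (hh : Measurable h) :
    ∫⁻ z, h z ∂(kerM m S f) = ∑ s ∈ S, ∫⁻ x, f s x * h (x, s) ∂m := by
  rw [kerM, lintegral_finsetSum_measure]
  refine Finset.sum_congr rfl fun s _ => ?_
  rw [lintegral_map hh (by fun_prop), lintegral_withDensity_eq_lintegral_mul _ (hf s) (by fun_prop)]
  rfl

lemma kerM_fst {Ω E : Type*} [MeasurableSpace Ω] [MeasurableSpace E] (m : Measure Ω)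
    (S : Finset E) (f : E → Ω → ℝ≥0∞) (hf : ∀ s, Measurable (f s))
    (h1 : ∀ x, ∑ s ∈ S, f s x = 1) : (kerM m S f).map Prod.fst = m := by
  refine Measure.ext_of_lintegral _ fun h hh => ?_
  rw [lintegral_map hh measurable_fst, lintegral_kerM m S f hf (by fun_prop),
    ← lintegral_finsetSum _ (fun s _ => by fun_prop)]
  simp only [← Finset.sum_mul, h1, one_mul]

lemma kerM_snd {Ω E : Type*} [MeasurableSpace Ω] [MeasurableSpace E] (m : Measure Ω)
    (S : Finset E) (f : E → Ω → ℝ≥0∞) (hf : ∀ s, Measurable (f s)) :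
    (kerM m S f).map Prod.snd = dM S (fun s => ∫⁻ x, f s x ∂m) := by
  refine Measure.ext_of_lintegral _ fun h hh => ?_
  rw [lintegral_map hh measurable_snd, lintegral_kerM m S f hf (by fun_prop),
    lintegral_dM _ _ hh]
  refine Finset.sum_congr rfl fun s _ => ?_
  exact lintegral_mul_const (h s) (hf s)

lemma Wp_le {E : Type*} [MetricSpace E] [MeasurableSpace E] {p : ℝ} {μ ν : Measure E}
    (γ : Measure (E × E)) (h1 : γ.map Prod.fst = μ) (h2 : γ.map Prod.snd = ν) :
    Wp p μ ν ≤ (∫⁻ z, edist z.1 z.2 ^ p ∂γ) ^ (1 / p) :=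
  iInf₂_le γ ⟨h1, h2⟩

lemma exists_of_Wp_lt {E : Type*} [MetricSpace E] [MeasurableSpace E] {p : ℝ} {μ ν : Measure E} {c : ℝ≥0∞} (h : Wp p μ ν < c) :
    ∃ γ : Measure (E × E), γ.map Prod.fst = μ ∧ γ.map Prod.snd = ν ∧
      (∫⁻ z, edist z.1 z.2 ^ p ∂γ) ^ (1 / p) < c := by
  simp only [Wp, iInf_lt_iff] at h
  obtain ⟨γ, hγ, h⟩ := h
  exact ⟨γ, hγ.1, hγ.2, h⟩

lemma measurable_edistp (p : ℝ) : Measurable (fun z : E × E => edist z.1 z.2 ^ p) := by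
  have : SecondCountableTopology E := UniformSpace.secondCountable_of_separable E
  have : Measurable (fun z : E × E => edist z.1 z.2) := measurable_edist
  fun_prop

lemma Wp_symm_le (p : ℝ) (μ ν : Measure E) : Wp p μ ν ≤ Wp p ν μ := by
  refine le_iInf₂ fun γ hγ => ?_
  refine (Wp_le (γ.map Prod.swap) ?_ ?_).trans ?_
  · rw [Measure.map_map measurable_fst measurable_swap]; exact hγ.2
  · rw [Measure.map_map measurable_snd measurable_swap]; exact hγ.1
  · rw [lintegral_map (measurable_edistp p) measurable_swap]
    simp [edist_comm]

lemma Wp_symm (p : ℝ) (μ ν : Measure E) : Wp p μ ν = Wp p ν μ :=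
  le_antisymm (Wp_symm_le p μ ν) (Wp_symm_le p ν μ)

lemma Wp_add_le {p : ℝ} (hp : 1 ≤ p) (μ ν e : Measure E) : Wp p (μ + e) (ν + e) ≤ Wp p μ ν := by
  refine le_iInf₂ fun γ hγ => ?_
  refine (Wp_le (γ + e.map (fun x => (x, x))) ?_ ?_).trans ?_
  · rw [Measure.map_add _ _ measurable_fst, Measure.map_map measurable_fst (by fun_prop), hγ.1]
    congr 1; exact Measure.map_id
  · rw [Measure.map_add _ _ measurable_snd, Measure.map_map measurable_snd (by fun_prop), hγ.2]
    congr 1; exact Measure.map_id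
  · rw [lintegral_add_measure, lintegral_map (measurable_edistp p) (by fun_prop)]
    simp [ENNReal.zero_rpow_of_pos (show 0 < p by linarith)]

lemma Wp_zero {p : ℝ} (hp : 1 ≤ p) : Wp p (0 : Measure E) 0 = 0 := by
  refine le_antisymm ((Wp_le 0 (by simp) (by simp)).trans ?_) zero_le
  simp; linarith

/-- Disintegration of a coupling with a finitely supported second marginal. -/
lemma disint {α β : Measure E} [IsFiniteMeasure α] (S : Finset E) (hS : S.Nonempty)
    (hβ : β (↑S : Set E)ᶜ = 0) (γ : Measure (E × E)) (h1 : γ.map Prod.fst = α)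
    (h2 : γ.map Prod.snd = β) :
    ∃ f : E → E → ℝ≥0∞, (∀ s, Measurable (f s)) ∧ (∀ x, ∑ s ∈ S, f s x = 1) ∧
      ∀ h : E × E → ℝ≥0∞, Measurable h →
        ∫⁻ z, h z ∂γ = ∑ s ∈ S, ∫⁻ x, f s x * h (x, s) ∂α := by
  classical
  obtain ⟨s0, hs0⟩ := hS
  have hγfin : IsFiniteMeasure γ := by
    constructor
    have := measure_lt_top α Set.univ
    rwa [← h1, Measure.map_apply measurable_fst MeasurableSet.univ] at this
  set γs : E → Measure E := fun s => (γ.restrict (Prod.snd ⁻¹' {s})).map Prod.fst with hγs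
  have hfin : ∀ s, IsFiniteMeasure (γs s) := fun s => by rw [hγs]; infer_instance
  have hle : ∀ s, γs s ≤ α := fun s => by
    rw [← h1]; exact Measure.map_mono Measure.restrict_le_self measurable_fst
  have hwd : ∀ s, α.withDensity ((γs s).rnDeriv α) = γs s := fun s =>
    Measure.withDensity_rnDeriv_eq _ _ (Measure.absolutelyContinuous_of_le (hle s))
  have key0 : ∀ h : E × E → ℝ≥0∞, Measurable h →
        ∫⁻ z, h z ∂γ = ∑ s ∈ S, ∫⁻ x, (γs s).rnDeriv α x * h (x, s) ∂α := by
    intro h hh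
    have hae : γ (Prod.snd ⁻¹' (↑S : Set E))ᶜ = 0 := by
      rw [← Set.preimage_compl, ← Measure.map_apply measurable_snd S.measurableSet.compl, h2, hβ]
    have e1 : ∫⁻ z, h z ∂γ = ∫⁻ z in ⋃ s ∈ S, (Prod.snd ⁻¹' {s}), h z ∂γ := by
      rw [Measure.restrict_eq_self_of_ae_mem]
      rw [ae_iff]
      refine measure_mono_null ?_ hae
      intro z hz; simpa using hz
    rw [e1, lintegral_biUnion_finset]
    · refine Finset.sum_congr rfl fun s _ => ?_
      have : ∫⁻ x, (γs s).rnDeriv α x * h (x, s) ∂α = ∫⁻ x, h (x, s) ∂(γs s) := by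
        conv_rhs => rw [← hwd s]
        rw [lintegral_withDensity_eq_lintegral_mul _ (Measure.measurable_rnDeriv _ _) (by fun_prop)]
        rfl
      rw [this, hγs, lintegral_map (by fun_prop) measurable_fst]
      refine setLIntegral_congr_fun (measurable_snd (measurableSet_singleton s)) ?_
      rintro ⟨a, b⟩ hz
      simp only [Set.mem_preimage, Set.mem_singleton_iff] at hz
      simp [hz]
    · intro a _ b _ hab
      refine Set.disjoint_left.2 fun z hz hz' => hab ?_
      simp only [Set.mem_preimage, Set.mem_singleton_iff] at hz hz'
      rw [← hz, hz']
    · exact fun s _ => measurable_snd (measurableSet_singleton s)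
  have hsum : ∀ᵐ x ∂α, ∑ s ∈ S, (γs s).rnDeriv α x = 1 := by
    refine ae_eq_of_forall_setLIntegral_eq_of_sigmaFinite ?_ measurable_const ?_
    · exact Finset.measurable_fun_sum _ fun s _ => Measure.measurable_rnDeriv _ _
    · intro A hA _
      rw [lintegral_finsetSum _ (fun s _ => Measure.measurable_rnDeriv _ _)]
      have := key0 (fun z => A.indicator 1 z.1) (by
        exact (measurable_const.indicator hA).comp measurable_fst)
      have e : ∫⁻ z, A.indicator (1 : E → ℝ≥0∞) z.1 ∂γ = α A := by
        rw [← h1, ← lintegral_map (f := A.indicator (1 : E → ℝ≥0∞)) (measurable_const.indicator hA) measurable_fst,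
          lintegral_indicator_one hA]
      rw [e] at this
      simp only [lintegral_const, one_mul, Measure.restrict_apply_univ]
      rw [this]
      refine Finset.sum_congr rfl fun s _ => ?_
      rw [← lintegral_indicator hA]
      congr 1; ext x
      by_cases hx : x ∈ A <;> simp [hx]
  have hG : MeasurableSet {x | ∑ s ∈ S, (γs s).rnDeriv α x = 1} :=
    (Finset.measurable_fun_sum _ fun s _ => Measure.measurable_rnDeriv _ _)
      (measurableSet_singleton _)
  refine ⟨fun s x => if ∑ s ∈ S, (γs s).rnDeriv α x = 1 then (γs s).rnDeriv α x else
    if s = s0 then 1 else 0, ?_, ?_, ?_⟩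
  · intro s
    exact Measurable.ite hG (Measure.measurable_rnDeriv _ _) measurable_const
  · intro x
    by_cases hx : ∑ s ∈ S, (γs s).rnDeriv α x = 1
    · simp only [hx, if_true]
    · simp [hx, hs0]
  · intro h hh
    rw [key0 h hh]
    refine Finset.sum_congr rfl fun s _ => lintegral_congr_ae ?_
    filter_upwards [hsum] with x hx
    simp [hx]

/-- Gluing, when one end is finitely supported. -/
lemma glue {p : ℝ} (hp : 1 ≤ p) {α ν β : Measure E} [IsFiniteMeasure ν] (S : Finset E)
    (hS : S.Nonempty) (hβ : β (↑S : Set E)ᶜ = 0) (γ₁ γ₂ : Measure (E × E))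
    (h1 : γ₁.map Prod.fst = α) (h2 : γ₁.map Prod.snd = ν)
    (h3 : γ₂.map Prod.fst = ν) (h4 : γ₂.map Prod.snd = β) :
    ∃ γ : Measure (E × E), γ.map Prod.fst = α ∧ γ.map Prod.snd = β ∧
      (∫⁻ z, edist z.1 z.2 ^ p ∂γ) ^ (1 / p) ≤ (∫⁻ z, edist z.1 z.2 ^ p ∂γ₁) ^ (1 / p)
        + (∫⁻ z, edist z.1 z.2 ^ p ∂γ₂) ^ (1 / p) := by
  have : SecondCountableTopology E := UniformSpace.secondCountable_of_separable E
  obtain ⟨f, hf, hf1, hintg⟩ := disint S hS hβ γ₂ h3 h4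
  set Λ := kerM γ₁ S (fun s z => f s z.2) with hΛ
  have hfm : ∀ s, Measurable (fun z : E × E => f s z.2) := fun s => (hf s).comp measurable_snd
  have hΛ1 : Λ.map Prod.fst = γ₁ := kerM_fst _ _ _ hfm (fun z => hf1 z.2)
  have hm2 : Measurable (fun y : (E × E) × E => (y.1.2, y.2)) := by fun_prop
  have hm3 : Measurable (fun y : (E × E) × E => (y.1.1, y.2)) := by fun_prop
  have hΛ2 : Λ.map (fun y : (E × E) × E => (y.1.2, y.2)) = γ₂ := by
    refine Measure.ext_of_lintegral _ fun h hh => ?_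
    rw [lintegral_map hh hm2, lintegral_kerM _ _ _ hfm (by fun_prop), hintg h hh]
    refine Finset.sum_congr rfl fun s _ => ?_
    have hhm : Measurable fun x => f s x * h (x, s) := (hf s).mul (hh.comp (by fun_prop))
    rw [← h2, lintegral_map hhm measurable_snd]
  have hd1 : Measurable (fun y : (E × E) × E => edist y.1.1 y.1.2) :=
    measurable_edist.comp measurable_fst
  have hd2 : Measurable (fun y : (E × E) × E => edist y.1.2 y.2) :=
    measurable_edist.comp hm2
  refine ⟨Λ.map (fun y : (E × E) × E => (y.1.1, y.2)), ?_, ?_, ?_⟩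
  · rw [Measure.map_map measurable_fst hm3, ← h1, ← hΛ1, Measure.map_map measurable_fst measurable_fst]
    rfl
  · rw [Measure.map_map measurable_snd hm3, ← h4, ← hΛ2, Measure.map_map measurable_snd hm2]
    rfl
  · rw [lintegral_map (measurable_edistp p) hm3]
    have e1 : ∫⁻ z, edist z.1 z.2 ^ p ∂γ₁ = ∫⁻ y, edist y.1.1 y.1.2 ^ p ∂Λ := by
      rw [← hΛ1, lintegral_map (measurable_edistp p) measurable_fst]
    have e2 : ∫⁻ z, edist z.1 z.2 ^ p ∂γ₂ = ∫⁻ y, edist y.1.2 y.2 ^ p ∂Λ := by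
      rw [← hΛ2, lintegral_map (measurable_edistp p) hm2]
    rw [e1, e2]
    refine le_trans ?_ (ENNReal.lintegral_Lp_add_le hd1.aemeasurable hd2.aemeasurable hp)
    have hp0 : 0 ≤ p := by linarith
    refine ENNReal.rpow_le_rpow (lintegral_mono fun y => ?_) (by positivity)
    exact ENNReal.rpow_le_rpow (edist_triangle _ _ _) hp0

lemma Wp_triangle {p : ℝ} (hp : 1 ≤ p) {α ν β : Measure E} [IsFiniteMeasure ν] (S : Finset E)
    (hS : S.Nonempty) (hβ : β (↑S : Set E)ᶜ = 0) : Wp p α β ≤ Wp p α ν + Wp p ν β := by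
  refine ENNReal.le_of_forall_pos_le_add fun ε hε hfin => ?_
  have hε' : (ε / 2 : ℝ≥0∞) ≠ 0 := by simp [hε.ne']
  have hA : Wp p α ν ≠ ∞ := fun h => by simp [h] at hfin
  have hB : Wp p ν β ≠ ∞ := fun h => by simp [h] at hfin
  obtain ⟨γ₁, h1, h2, hc1⟩ := exists_of_Wp_lt (ENNReal.lt_add_right hA hε')
  obtain ⟨γ₂, h3, h4, hc2⟩ := exists_of_Wp_lt (ENNReal.lt_add_right hB hε')
  obtain ⟨γ, h5, h6, hc⟩ := glue hp S hS hβ γ₁ γ₂ h1 h2 h3 h4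
  calc Wp p α β ≤ _ := Wp_le γ h5 h6
    _ ≤ _ := hc
    _ ≤ (Wp p α ν + ε / 2) + (Wp p ν β + ε / 2) := add_le_add hc1.le hc2.le
    _ = Wp p α ν + Wp p ν β + (ε / 2 + ε / 2) := by ring
    _ = _ := by rw [ENNReal.add_halves]

lemma Wp_push {p : ℝ} (α : Measure E) (S : Finset E) (f : E → E → ℝ≥0∞)
    (hf : ∀ s, Measurable (f s)) (h1 : ∀ x, ∑ s ∈ S, f s x = 1) :
    Wp p α (dM S (fun s => ∫⁻ x, f s x ∂α)) ≤
      (∑ s ∈ S, ∫⁻ x, f s x * edist x s ^ p ∂α) ^ (1 / p) := by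
  refine (Wp_le (kerM α S f) (kerM_fst _ _ _ hf h1) (kerM_snd _ _ _ hf)).trans ?_
  rw [lintegral_kerM _ _ _ hf (measurable_edistp p)]

lemma dM_finite (S : Finset E) (u : E → ℝ≥0∞) (h : ∀ s ∈ S, u s ≠ ∞) :
    IsFiniteMeasure (dM S u) := by
  constructor
  have := lintegral_dM S u (h := fun _ => 1) measurable_const
  simp only [lintegral_one, mul_one] at this
  rw [this]
  exact ENNReal.sum_lt_top.2 fun s hs => (h s hs).lt_top

lemma dM_compl (S : Finset E) (u : E → ℝ≥0∞) : dM S u (↑S : Set E)ᶜ = 0 := by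
  simp only [dM, Measure.coe_finsetSum, Finset.sum_apply, Measure.smul_apply, smul_eq_mul]
  refine Finset.sum_eq_zero fun s hs => ?_
  rw [Measure.dirac_apply' _ S.measurableSet.compl]
  simp [hs]

lemma dM_add (S : Finset E) (u v : E → ℝ≥0∞) :
    dM S (fun s => u s + v s) = dM S u + dM S v := by
  simp [dM, add_smul, Finset.sum_add_distrib]

lemma dM_congr (S : Finset E) (u v : E → ℝ≥0∞) (h : ∀ s ∈ S, u s = v s) : dM S u = dM S v :=
  Finset.sum_congr rfl fun s hs => by rw [h s hs]

lemma dM_eq_zero (S : Finset E) (u : E → ℝ≥0∞) (h : ∀ s ∈ S, u s = 0) : dM S u = 0 :=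
  Finset.sum_eq_zero fun s hs => by rw [h s hs, zero_smul]

lemma lintegral_emp (n : ℕ) (X : Fin n → E) {h : E → ℝ≥0∞} (hh : Measurable h) :
    ∫⁻ x, h x ∂(empiricalMeasure n X) = (n : ℝ≥0∞)⁻¹ * ∑ j, h (X j) := by
  simp [empiricalMeasure, lintegral_finsetSum_measure, lintegral_dirac' _ hh]

/-- One deterministic step of the chain. -/
lemma step_det {p : ℝ} (hp : 1 ≤ p) (S T : Finset E) (hS : S.Nonempty)
    (P : E → E → ℝ≥0∞)
    (hPm : ∀ t, Measurable (P t)) (hP1 : ∀ x, ∑ t ∈ T, P t x = 1) (ρ w : E → ℝ≥0∞)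
    (hρ : ∀ s ∈ S, ρ s ≠ ∞) (hw : ∀ s ∈ S, w s ≠ ∞) (ρ' w' : E → ℝ≥0∞)
    (hρ' : ∀ t ∈ T, ∑ s ∈ S, ρ s * P t s = ρ' t) (hw' : ∀ t ∈ T, ∑ s ∈ S, w s * P t s = w' t) :
    Wp p (dM S (fun s => ρ s - w s)) (dM S (fun s => w s - ρ s)) ≤
      (∑ s ∈ S, ∑ t ∈ T, (ρ s - w s) * (P t s * edist s t ^ p)) ^ (1 / p) +
      ((∑ s ∈ S, ∑ t ∈ T, (w s - ρ s) * (P t s * edist s t ^ p)) ^ (1 / p) +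
      Wp p (dM T (fun s => ρ' s - w' s)) (dM T (fun s => w' s - ρ' s))) := by
  have hPle : ∀ t ∈ T, ∀ s, P t s ≤ 1 := fun t ht s => by
    rw [← hP1 s]; exact Finset.single_le_sum (f := fun t => P t s) (fun _ _ => zero_le) ht
  have push : ∀ u : E → ℝ≥0∞, Wp p (dM S u) (dM T (fun t => ∑ s ∈ S, u s * P t s)) ≤
      (∑ s ∈ S, ∑ t ∈ T, u s * (P t s * edist s t ^ p)) ^ (1 / p) := by
    intro u
    have h := Wp_push (p := p) (dM S u) T P hPm hP1
    simp only [lintegral_dM S u (hPm _)] at h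
    refine h.trans (le_of_eq ?_)
    congr 1
    rw [Finset.sum_comm]
    refine Finset.sum_congr rfl fun t _ => ?_
    have : Measurable fun x => P t x * edist x t ^ p :=
      (hPm t).mul ((measurable_edistp p).comp (by fun_prop : Measurable fun x : E => (x, t)))
    rw [lintegral_dM S u this]
  have hsumfin : ∀ u : E → ℝ≥0∞, (∀ s ∈ S, u s ≠ ∞) → ∀ t ∈ T, ∑ s ∈ S, u s * P t s ≠ ∞ := by
    intro u hu t ht
    refine (ENNReal.sum_lt_top.2 fun s hs => ?_).ne
    exact ENNReal.mul_lt_top (hu s hs).lt_top ((hPle t ht s).trans_lt ENNReal.one_lt_top)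
  set u : E → ℝ≥0∞ := fun s => ρ s - w s with hu
  set v : E → ℝ≥0∞ := fun s => w s - ρ s with hv
  have huf : ∀ s ∈ S, u s ≠ ∞ := fun s hs => (tsub_le_self.trans_lt (hρ s hs).lt_top).ne
  have hvf : ∀ s ∈ S, v s ≠ ∞ := fun s hs => (tsub_le_self.trans_lt (hw s hs).lt_top).ne
  have huv : ∀ a b : ℝ≥0∞, (a - b) + b = (b - a) + a := fun a b => by
    rw [tsub_add_eq_max, tsub_add_eq_max, max_comm]
  set πu : E → ℝ≥0∞ := fun t => ∑ s ∈ S, u s * P t s with hπu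
  set πv : E → ℝ≥0∞ := fun t => ∑ s ∈ S, v s * P t s with hπv
  have hbal : ∀ t ∈ T, πu t + w' t = πv t + ρ' t := by
    intro t ht
    rw [← hρ' t ht, ← hw' t ht, hπu, hπv]
    simp only [← Finset.sum_add_distrib, ← add_mul, hu, hv, huv]
  have hρ'f : ∀ t ∈ T, ρ' t ≠ ∞ := fun t ht => by rw [← hρ' t ht]; exact hsumfin ρ hρ t ht
  set e : E → ℝ≥0∞ := fun t => πu t - (ρ' t - w' t) with he
  have hu' : ∀ t ∈ T, πu t = (ρ' t - w' t) + e t := by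
    intro t ht
    rw [he]
    refine (add_tsub_cancel_of_le ?_).symm
    rw [tsub_le_iff_right, hbal t ht]
    exact le_add_self
  have hv' : ∀ t ∈ T, πv t = (w' t - ρ' t) + e t := by
    intro t ht
    have h := hbal t ht
    rw [hu' t ht, add_right_comm, huv, add_right_comm] at h
    exact ((ENNReal.add_left_inj (hρ'f t ht)).1 h).symm
  have hmid : Wp p (dM T πu) (dM T πv) ≤
      Wp p (dM T (fun s => ρ' s - w' s)) (dM T (fun s => w' s - ρ' s)) := by
    rw [dM_congr T _ _ hu', dM_congr T _ _ hv', dM_add, dM_add]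
    exact Wp_add_le hp _ _ _
  have : IsFiniteMeasure (dM T πu) := dM_finite _ _ (hsumfin u huf)
  have : IsFiniteMeasure (dM T πv) := dM_finite _ _ (hsumfin v hvf)
  calc Wp p (dM S u) (dM S v) ≤ Wp p (dM S u) (dM T πu) + Wp p (dM T πu) (dM S v) :=
        Wp_triangle hp S hS (dM_compl _ _)
    _ ≤ Wp p (dM S u) (dM T πu) + (Wp p (dM T πu) (dM T πv) + Wp p (dM T πv) (dM S v)) := by
        gcongr; exact Wp_triangle hp S hS (dM_compl _ _)
    _ ≤ _ := by
        rw [Wp_symm p (dM T πv), add_comm (Wp p (dM T πu) (dM T πv))]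
        gcongr
        · exact push u
        · exact push v

lemma fluct_real (μ : Measure E) [IsProbabilityMeasure μ] (n : ℕ) (hn : 1 ≤ n)
    (h : E → ℝ) (hh : Measurable h) (h0 : ∀ x, 0 ≤ h x) (h1 : ∀ x, h x ≤ 1) :
    ∫⁻ X : Fin n → E, ENNReal.ofReal |(n : ℝ)⁻¹ * ∑ j, h (X j) - ∫ x, h x ∂μ|
      ∂(sampleMeasure μ n) ≤ ENNReal.ofReal (√((∫ x, h x ∂μ) / n)) := by
  have hn0 : (0 : ℝ) < n := by exact_mod_cast hn
  have : IsProbabilityMeasure (sampleMeasure μ n) := by rw [sampleMeasure]; infer_instance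
  have hb : MemLp h 2 μ := memLp_of_bounded (a := 0) (b := 1)
    (ae_of_all _ fun x => ⟨h0 x, h1 x⟩) hh.aestronglyMeasurable 2
  have hintg : Integrable h μ := hb.integrable one_le_two
  set m := ∫ x, h x ∂μ with hm
  set Y : (Fin n → E) → ℝ := fun X => (n : ℝ)⁻¹ * ∑ j, h (X j) with hY
  have hYm : Measurable Y := by
    refine measurable_const.mul (Finset.measurable_fun_sum _ fun j _ => hh.comp (measurable_pi_apply j))
  have hsm : MemLp (fun X : Fin n → E => ∑ j, h (X j)) 2 (sampleMeasure μ n) := by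
    refine memLp_finsetSum _ fun j _ => ?_
    exact hb.comp_measurePreserving (measurePreserving_eval (fun _ => μ) j)
  have hYL : MemLp Y 2 (sampleMeasure μ n) := hsm.const_mul _
  have hEY : ∫ X, Y X ∂(sampleMeasure μ n) = m := by
    rw [hY, integral_const_mul, integral_finsetSum]
    · have : ∀ j : Fin n, ∫ X : Fin n → E, h (X j) ∂(sampleMeasure μ n) = m := fun j => by
        rw [sampleMeasure, integral_comp_eval (μ := fun _ => μ) (i := j) hh.aestronglyMeasurable]
      simp only [this]
      simp; field_simp
    · intro j _
      exact (hb.comp_measurePreserving (measurePreserving_eval (fun _ => μ) j)).integrable one_le_two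
  have hvar : ProbabilityTheory.variance Y (sampleMeasure μ n) ≤ m / n := by
    have e1 : ProbabilityTheory.variance Y (sampleMeasure μ n) =
        ((n : ℝ)⁻¹) ^ 2 * ProbabilityTheory.variance (fun X : Fin n → E => ∑ j, h (X j)) (sampleMeasure μ n) :=
      ProbabilityTheory.variance_const_mul _ _ _
    have e2 : ProbabilityTheory.variance (fun X : Fin n → E => ∑ j, h (X j)) (sampleMeasure μ n)
        = n * ProbabilityTheory.variance h μ := by
      have := ProbabilityTheory.variance_sum_pi (ι := Fin n) (μ := fun _ => μ) (X := fun _ => h) (fun _ => hb)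
      have e : (∑ i : Fin n, fun ω : Fin n → E => h (ω i)) = fun X : Fin n → E => ∑ j, h (X j) := by
        ext X; simp
      rw [e] at this
      rw [sampleMeasure, this]; simp
    have e3 : ProbabilityTheory.variance h μ ≤ m := by
      refine (ProbabilityTheory.variance_le_expectation_sq hh.aestronglyMeasurable).trans ?_
      refine integral_mono hb.integrable_sq hintg fun x => ?_
      simp only [Pi.pow_apply]
      nlinarith [h0 x, h1 x]
    rw [e1, e2]
    calc ((n : ℝ)⁻¹) ^ 2 * (n * ProbabilityTheory.variance h μ) = ProbabilityTheory.variance h μ / n := by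
          field_simp
      _ ≤ m / n := by gcongr
  have hZL : MemLp (fun X => |Y X - m|) 2 (sampleMeasure μ n) := (hYL.sub (memLp_const m)).abs
  have hsq : (∫ X, |Y X - m| ∂(sampleMeasure μ n)) ^ 2 ≤ m / n := by
    have v0 := ProbabilityTheory.variance_nonneg (fun X => |Y X - m|) (sampleMeasure μ n)
    rw [ProbabilityTheory.variance_eq_sub hZL] at v0
    have v1 := ProbabilityTheory.variance_eq_integral hYL.aemeasurable
    rw [hEY] at v1
    have v2 : ∫ X, ((fun X => |Y X - m|) ^ 2) X ∂(sampleMeasure μ n) = ProbabilityTheory.variance Y (sampleMeasure μ n) := by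
      rw [v1]; simp
    rw [v2] at v0
    linarith
  rw [← ofReal_integral_eq_lintegral_ofReal (hZL.integrable one_le_two) (ae_of_all _ fun X => abs_nonneg _)]
  exact ENNReal.ofReal_le_ofReal (Real.le_sqrt_of_sq_le hsq)

lemma fluct (μ : Measure E) [IsProbabilityMeasure μ] (n : ℕ) (hn : 1 ≤ n)
    (g : E → ℝ≥0∞) (hg : Measurable g) (h1 : ∀ x, g x ≤ 1) (k : ℕ)
    (hw : ((4 : ℝ≥0∞) ^ k)⁻¹ ≤ ∫⁻ x, g x ∂μ) :
    ∫⁻ X : Fin n → E, ((n : ℝ≥0∞)⁻¹ * ∑ j, g (X j) - ∫⁻ x, g x ∂μ) ∂(sampleMeasure μ n) ≤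
      ENNReal.ofReal (2 ^ k / √n) * ∫⁻ x, g x ∂μ ∧
    ∫⁻ X : Fin n → E, (∫⁻ x, g x ∂μ - (n : ℝ≥0∞)⁻¹ * ∑ j, g (X j)) ∂(sampleMeasure μ n) ≤
      ENNReal.ofReal (2 ^ k / √n) * ∫⁻ x, g x ∂μ := by
  have hn0 : (0 : ℝ) < n := by exact_mod_cast hn
  have gfin : ∀ x, g x ≠ ∞ := fun x => ((h1 x).trans_lt ENNReal.one_lt_top).ne
  set h : E → ℝ := fun x => (g x).toReal with hh
  have hgh : ∀ x, g x = ENNReal.ofReal (h x) := fun x => (ENNReal.ofReal_toReal (gfin x)).symm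
  have h0 : ∀ x, 0 ≤ h x := fun x => ENNReal.toReal_nonneg
  have hle : ∀ x, h x ≤ 1 := fun x => ENNReal.toReal_le_of_le_ofReal zero_le_one (by simpa using h1 x)
  have hm : Measurable h := hg.ennreal_toReal
  have hb : MemLp h 2 μ := memLp_of_bounded (a := 0) (b := 1)
    (ae_of_all _ fun x => ⟨h0 x, hle x⟩) hm.aestronglyMeasurable 2
  have hintg : Integrable h μ := hb.integrable one_le_two
  set m := ∫ x, h x ∂μ with hmdef
  have hgm : ∫⁻ x, g x ∂μ = ENNReal.ofReal m := by
    rw [hmdef, ofReal_integral_eq_lintegral_ofReal hintg (ae_of_all _ h0)]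
    simp only [hgh]
  have hm0 : 0 ≤ m := integral_nonneg h0
  have hemp : ∀ X : Fin n → E, (n : ℝ≥0∞)⁻¹ * ∑ j, g (X j) = ENNReal.ofReal ((n : ℝ)⁻¹ * ∑ j, h (X j)) := by
    intro X
    rw [ENNReal.ofReal_mul (by positivity), ENNReal.ofReal_inv_of_pos hn0, ENNReal.ofReal_natCast,
      ENNReal.ofReal_sum_of_nonneg fun j _ => h0 _]
    simp only [hgh]
  have hwr : ((4 : ℝ) ^ k)⁻¹ ≤ m := by
    rw [hgm] at hw
    have h4 : ((4 : ℝ≥0∞) ^ k)⁻¹ = ENNReal.ofReal (((4 : ℝ) ^ k)⁻¹) := by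
      rw [ENNReal.ofReal_inv_of_pos (by positivity), ENNReal.ofReal_pow (by norm_num)]
      simp
    rw [h4] at hw
    exact (ENNReal.ofReal_le_ofReal_iff hm0).1 hw
  have hmain := fluct_real μ n hn h hm h0 hle
  rw [← hmdef] at hmain
  have hend : ENNReal.ofReal (√(m / n)) ≤ ENNReal.ofReal (2 ^ k / √n) * ENNReal.ofReal m := by
    rw [← ENNReal.ofReal_mul (by positivity)]
    refine ENNReal.ofReal_le_ofReal ?_
    rw [Real.sqrt_div hm0, div_mul_eq_mul_div]
    gcongr
    rw [Real.sqrt_le_left (by positivity)]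
    have h24 : ((2 : ℝ) ^ k) ^ 2 = 4 ^ k := by rw [← pow_mul, mul_comm, pow_mul]; norm_num
    rw [mul_pow, h24]
    have : 1 ≤ 4 ^ k * m := by
      rw [inv_le_iff_one_le_mul₀' (by positivity)] at hwr; exact hwr
    nlinarith
  rw [hgm]
  constructor
  · refine le_trans (lintegral_mono fun X => ?_) (hmain.trans hend)
    rw [hemp, ← ENNReal.ofReal_sub _ hm0]
    exact ENNReal.ofReal_le_ofReal (le_abs_self _)
  · refine le_trans (lintegral_mono fun X => ?_) (hmain.trans hend)
    rw [hemp, ← ENNReal.ofReal_sub _ (mul_nonneg (by positivity) (Finset.sum_nonneg fun j _ => h0 _)), abs_sub_comm]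
    exact ENNReal.ofReal_le_ofReal (le_abs_self _)

lemma Lp_add3 {Ω : Type*} [MeasurableSpace Ω] {m : Measure Ω} {p : ℝ} (hp : 1 ≤ p)
    (F A B C : Ω → ℝ≥0∞) (hA : Measurable A) (hB : Measurable B) (hC : Measurable C)
    (hF : ∀ ω, F ω ≤ A ω ^ (1 / p) + (B ω ^ (1 / p) + C ω)) :
    (∫⁻ ω, F ω ^ p ∂m) ^ (1 / p) ≤ (∫⁻ ω, A ω ∂m) ^ (1 / p) +
      ((∫⁻ ω, B ω ∂m) ^ (1 / p) + (∫⁻ ω, C ω ^ p ∂m) ^ (1 / p)) := by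
  have hp0 : 0 < p := by linarith
  have hA' : Measurable fun ω => A ω ^ (1 / p) := by fun_prop
  have hB' : Measurable fun ω => B ω ^ (1 / p) := by fun_prop
  have e : ∀ a : ℝ≥0∞, (a ^ (1 / p)) ^ p = a := fun a => by
    rw [← ENNReal.rpow_mul, one_div, inv_mul_cancel₀ hp0.ne', ENNReal.rpow_one]
  calc (∫⁻ ω, F ω ^ p ∂m) ^ (1 / p)
      ≤ (∫⁻ ω, ((fun ω => A ω ^ (1 / p)) + ((fun ω => B ω ^ (1 / p)) + C)) ω ^ p ∂m) ^ (1 / p) := by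
        refine ENNReal.rpow_le_rpow (lintegral_mono fun ω => ?_) (by positivity)
        exact ENNReal.rpow_le_rpow (hF ω) hp0.le
    _ ≤ (∫⁻ ω, (A ω ^ (1 / p)) ^ p ∂m) ^ (1 / p) +
        (∫⁻ ω, ((fun ω => B ω ^ (1 / p)) + C) ω ^ p ∂m) ^ (1 / p) :=
        ENNReal.lintegral_Lp_add_le hA'.aemeasurable (hB'.add hC).aemeasurable hp
    _ ≤ (∫⁻ ω, (A ω ^ (1 / p)) ^ p ∂m) ^ (1 / p) + ((∫⁻ ω, (B ω ^ (1 / p)) ^ p ∂m) ^ (1 / p) +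
        (∫⁻ ω, C ω ^ p ∂m) ^ (1 / p)) := by
        gcongr
        exact ENNReal.lintegral_Lp_add_le hB'.aemeasurable hC.aemeasurable hp
    _ = _ := by simp only [e]

lemma chain {p : ℝ} (hp : 1 ≤ p) (μ : Measure E) [IsProbabilityMeasure μ] (n : ℕ) (hn : 1 ≤ n)
    (S : ℕ → Finset E) (hS : ∀ k, (S k).Nonempty) (w : ℕ → E → ℝ≥0∞)
    (hw : ∀ k, ∀ s ∈ S k, ((4 : ℝ≥0∞) ^ k)⁻¹ ≤ w k s) (hwf : ∀ k, ∀ s ∈ S k, w k s ≠ ∞)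
    (hS0 : ∃ s0, S 0 = {s0} ∧ w 0 s0 = 1) (P : ℕ → E → E → ℝ≥0∞) (hPm : ∀ k t, Measurable (P k t))
    (hP1 : ∀ k x, ∑ t ∈ S k, P k t x = 1)
    (hPw : ∀ k, ∀ t ∈ S k, ∑ s ∈ S (k + 1), w (k + 1) s * P k t s = w k t)
    (D : ℕ → ℝ≥0∞)
    (hPc : ∀ k, ∑ s ∈ S (k + 1), ∑ t ∈ S k, w (k + 1) s * (P k t s * edist s t ^ p) ≤ D k ^ p)
    (K : ℕ) :
    ∀ g : E → E → ℝ≥0∞, (∀ s, Measurable (g s)) → (∀ x, ∑ s ∈ S K, g s x = 1) →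
      (∀ s ∈ S K, ∫⁻ x, g s x ∂μ = w K s) →
      ∃ G : (Fin n → E) → ℝ≥0∞, Measurable G ∧
        (∀ X, Wp p (dM (S K) (fun s => (n : ℝ≥0∞)⁻¹ * ∑ j, g s (X j) - w K s))
          (dM (S K) (fun s => w K s - (n : ℝ≥0∞)⁻¹ * ∑ j, g s (X j))) ≤ G X) ∧
        (∫⁻ X, G X ^ p ∂(sampleMeasure μ n)) ^ (1 / p) ≤
          ∑ k ∈ Finset.range K, 2 * (ENNReal.ofReal (2 ^ (k + 1) / √n) ^ (1 / p) * D k) := by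
  have hp0 : 0 < p := by linarith
  have hn0 : (n : ℝ≥0∞) ≠ 0 := by exact_mod_cast (by omega : n ≠ 0)
  induction K with
  | zero =>
    intro g hg hg1 hgw
    obtain ⟨s0, hs0, hw0⟩ := hS0
    refine ⟨fun _ => 0, measurable_const, fun X => ?_, ?_⟩
    · have : ∀ s ∈ S 0, (n : ℝ≥0∞)⁻¹ * ∑ j, g s (X j) = w 0 s := by
        intro s hs
        rw [hs0, Finset.mem_singleton] at hs
        simp only [hs0, Finset.sum_singleton] at hg1
        rw [hs, hw0]
        simp only [hg1]
        simp [ENNReal.inv_mul_cancel hn0]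
      rw [dM_eq_zero _ _ (fun s hs => by rw [this s hs, tsub_self]),
        dM_eq_zero _ _ (fun s hs => by rw [this s hs, tsub_self]), Wp_zero hp]
    · simp [hp0]
  | succ K ih =>
    intro g hg hg1 hgw
    have hgle : ∀ s ∈ S (K + 1), ∀ x, g s x ≤ 1 := fun s hs x => by
      rw [← hg1 x]; exact Finset.single_le_sum (f := fun t => g t x) (fun _ _ => zero_le) hs
    obtain ⟨G, hGm, hGW, hGL⟩ := ih (fun t x => ∑ s ∈ S (K + 1), g s x * P K t s)
      (fun t => Finset.measurable_fun_sum _ fun s _ => (hg s).mul_const _)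
      (fun x => by
        rw [Finset.sum_comm]
        simp only [← Finset.mul_sum, hP1, mul_one, hg1])
      (fun t ht => by
        rw [lintegral_finsetSum _ (fun s _ => (hg s).mul_const _), ← hPw K t ht]
        refine Finset.sum_congr rfl fun s hs => ?_
        rw [lintegral_mul_const _ (hg s), hgw s hs])
    set ρ : (Fin n → E) → E → ℝ≥0∞ := fun X s => (n : ℝ≥0∞)⁻¹ * ∑ j, g s (X j) with hρ
    have hρm : ∀ s, Measurable fun X => ρ X s := fun s =>
      measurable_const.mul (Finset.measurable_fun_sum _ fun j _ => (hg s).comp (measurable_pi_apply j))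
    set A : (Fin n → E) → ℝ≥0∞ := fun X => ∑ s ∈ S (K + 1), ∑ t ∈ S K,
      (ρ X s - w (K + 1) s) * (P K t s * edist s t ^ p) with hA
    set B : (Fin n → E) → ℝ≥0∞ := fun X => ∑ s ∈ S (K + 1), ∑ t ∈ S K,
      (w (K + 1) s - ρ X s) * (P K t s * edist s t ^ p) with hB
    have hum : ∀ s, Measurable fun X => ρ X s - w (K + 1) s := fun s => (hρm s).sub measurable_const
    have hvm : ∀ s, Measurable fun X => w (K + 1) s - ρ X s := fun s => measurable_const.sub (hρm s)
    have hAm : Measurable A := Finset.measurable_fun_sum _ fun s _ =>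
      Finset.measurable_fun_sum _ fun t _ => (hum s).mul_const _
    have hBm : Measurable B := Finset.measurable_fun_sum _ fun s _ =>
      Finset.measurable_fun_sum _ fun t _ => (hvm s).mul_const _
    set r := ENNReal.ofReal (2 ^ (K + 1) / √n) with hr
    have hfl : ∀ s ∈ S (K + 1), (∫⁻ X, (ρ X s - w (K + 1) s) ∂(sampleMeasure μ n) ≤ r * w (K + 1) s) ∧
        (∫⁻ X, (w (K + 1) s - ρ X s) ∂(sampleMeasure μ n) ≤ r * w (K + 1) s) := by
      intro s hs
      have := fluct μ n hn (g s) (hg s) (hgle s hs) (K + 1) (by rw [hgw s hs]; exact hw _ s hs)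
      rwa [hgw s hs] at this
    have hgen : ∀ U : (Fin n → E) → E → ℝ≥0∞, (∀ s, Measurable fun X => U X s) →
        (∀ s ∈ S (K + 1), ∫⁻ X, U X s ∂(sampleMeasure μ n) ≤ r * w (K + 1) s) →
        (∫⁻ X, ∑ s ∈ S (K + 1), ∑ t ∈ S K, U X s * (P K t s * edist s t ^ p) ∂(sampleMeasure μ n)) ^ (1 / p)
          ≤ r ^ (1 / p) * D K := by
      intro U hUm hU
      have e : D K = (D K ^ p) ^ (1 / p) := by
        rw [← ENNReal.rpow_mul, mul_one_div_cancel hp0.ne', ENNReal.rpow_one]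
      rw [e, ← ENNReal.mul_rpow_of_nonneg _ _ (by positivity)]
      refine ENNReal.rpow_le_rpow ?_ (by positivity)
      rw [lintegral_finsetSum _ fun s _ => Finset.measurable_fun_sum _ fun t _ => (hUm s).mul_const _]
      refine le_trans ?_ (mul_le_mul_right (hPc K) r)
      rw [Finset.mul_sum]
      refine Finset.sum_le_sum fun s hs => ?_
      rw [lintegral_finsetSum _ fun t _ => (hUm s).mul_const _, Finset.mul_sum]
      refine Finset.sum_le_sum fun t _ => ?_
      rw [lintegral_mul_const _ (hUm s), ← mul_assoc r]
      exact mul_le_mul_left (hU s hs) _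
    refine ⟨fun X => A X ^ (1 / p) + (B X ^ (1 / p) + G X), by fun_prop, fun X => ?_, ?_⟩
    · have hρf : ∀ s ∈ S (K + 1), ρ X s ≠ ∞ := by
        intro s hs
        refine (ENNReal.mul_lt_top (by simpa using hn0.bot_lt) (ENNReal.sum_lt_top.2 fun j _ => ?_)).ne
        exact (hgle s hs _).trans_lt ENNReal.one_lt_top
      have h := step_det hp (S (K + 1)) (S K) (hS _) (P K) (hPm K) (hP1 K) (ρ X) (w (K + 1))
        hρf (hwf _) (fun t => (n : ℝ≥0∞)⁻¹ * ∑ j, ∑ s ∈ S (K + 1), g s (X j) * P K t s) (w K)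
        (fun t _ => by
          rw [Finset.sum_comm, Finset.mul_sum]
          refine Finset.sum_congr rfl fun s _ => ?_
          rw [hρ, ← Finset.sum_mul, mul_assoc]) (hPw K)
      refine h.trans ?_
      exact add_le_add le_rfl (add_le_add le_rfl (hGW X))
    · refine (Lp_add3 hp _ A B G hAm hBm hGm (fun ω => le_rfl)).trans ?_
      rw [Finset.sum_range_succ]
      have hA1 := hgen (fun X s => ρ X s - w (K + 1) s) hum (fun s hs => (hfl s hs).1)
      have hB1 := hgen (fun X s => w (K + 1) s - ρ X s) hvm (fun s hs => (hfl s hs).2)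
      calc _ ≤ r ^ (1 / p) * D K + (r ^ (1 / p) * D K +
            ∑ k ∈ Finset.range K, 2 * (ENNReal.ofReal (2 ^ (k + 1) / √n) ^ (1 / p) * D k)) := by
            gcongr
        _ = _ := by ring

lemma eq_dM (ν : Measure E) (S : Finset E) (h : ν (↑S : Set E)ᶜ = 0) :
    ν = dM S (fun s => ν {s}) := by
  refine Measure.ext_of_lintegral _ fun f hf => ?_
  rw [lintegral_dM _ _ hf]
  have : ν.restrict (↑S : Set E) = ν := Measure.restrict_eq_self_of_ae_mem (by
    rw [ae_iff]; exact h)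
  conv_lhs => rw [← this]
  rw [lintegral_finset]
  simp only [mul_comm]

lemma disint_mass {α β : Measure E} (S : Finset E) (γ : Measure (E × E))
    (h2 : γ.map Prod.snd = β) (f : E → E → ℝ≥0∞)
    (hintg : ∀ h : E × E → ℝ≥0∞, Measurable h →
        ∫⁻ z, h z ∂γ = ∑ s ∈ S, ∫⁻ x, f s x * h (x, s) ∂α) (s : E) (hs : s ∈ S) :
    ∫⁻ x, f s x ∂α = β {s} := by
  classical
  have hm : Measurable (({s} : Set E).indicator (1 : E → ℝ≥0∞)) :=
    measurable_const.indicator (measurableSet_singleton s)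
  rw [← lintegral_indicator_one (measurableSet_singleton s), ← h2,
    lintegral_map hm measurable_snd, hintg (fun z => ({s} : Set E).indicator (1 : E → ℝ≥0∞) z.2) (hm.comp measurable_snd)]
  rw [Finset.sum_eq_single s]
  · simp
  · intro b _ hb
    simp [hb]
  · exact fun h => absurd hs h

lemma emp_compl [DecidableEq E] (n : ℕ) (x : Fin n → E) :
    empiricalMeasure n x (↑(Finset.univ.image x) : Set E)ᶜ = 0 := by
  simp only [empiricalMeasure, Measure.smul_apply, Measure.coe_finsetSum, Finset.sum_apply, smul_eq_mul]
  rw [Finset.sum_eq_zero, mul_zero]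
  intro i _
  rw [Measure.dirac_apply' _ (Finset.measurableSet _).compl]
  simp

lemma emp_ge [DecidableEq E] (n : ℕ) (x : Fin n → E) (s : E) (hs : s ∈ Finset.univ.image x) :
    (n : ℝ≥0∞)⁻¹ ≤ empiricalMeasure n x {s} := by
  obtain ⟨i, _, rfl⟩ := Finset.mem_image.1 hs
  simp only [empiricalMeasure, Measure.smul_apply, Measure.coe_finsetSum, Finset.sum_apply, smul_eq_mul]
  refine le_mul_of_one_le_right zero_le ?_
  have : Measure.dirac (x i) {x i} = 1 := by simp
  rw [← this]
  exact Finset.single_le_sum (f := fun j => Measure.dirac (x j) {x i}) (fun _ _ => zero_le) (Finset.mem_univ i)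

lemma emp_prob (n : ℕ) (hn : n ≠ 0) (x : Fin n → E) : IsProbabilityMeasure (empiricalMeasure n x) := by
  constructor
  have := lintegral_emp n x (h := fun _ => 1) measurable_const
  simp only [lintegral_one] at this
  rw [this]
  simp [ENNReal.inv_mul_cancel, hn]

lemma main_bound {p : ℝ} (hp : 1 ≤ p) (μ : Measure E) [IsProbabilityMeasure μ] (n : ℕ) (hn : 1 ≤ n)
    (x : ∀ k : ℕ, Fin (4 ^ k) → E) (γ : ℕ → Measure (E × E))
    (h1 : ∀ k, (γ k).map Prod.fst = μ) (h2 : ∀ k, (γ k).map Prod.snd = empiricalMeasure (4 ^ k) (x k))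
    (c : ℕ → ℝ≥0∞) (hc : ∀ k, (∫⁻ z, edist z.1 z.2 ^ p ∂(γ k)) ^ (1 / p) ≤ c k) (K : ℕ) :
    expWpPow p μ n ≤ 2 * c K + ∑ k ∈ Finset.range K,
      2 * (ENNReal.ofReal (2 ^ (k + 1) / √n) ^ (1 / p) * (c (k + 1) + c k)) := by
  classical
  have hp0 : 0 < p := by linarith
  have hn0 : (n : ℝ≥0∞) ≠ 0 := by exact_mod_cast (by omega : n ≠ 0)
  set ν : ℕ → Measure E := fun k => empiricalMeasure (4 ^ k) (x k) with hν
  have hprob : ∀ k, IsProbabilityMeasure (ν k) := fun k => emp_prob _ (by positivity) _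
  set S : ℕ → Finset E := fun k => Finset.univ.image (x k) with hSdef
  have hS : ∀ k, (S k).Nonempty := fun k =>
    ⟨x k ⟨0, by positivity⟩, Finset.mem_image_of_mem _ (Finset.mem_univ _)⟩
  have hcompl : ∀ k, ν k (↑(S k) : Set E)ᶜ = 0 := fun k => emp_compl _ _
  set w : ℕ → E → ℝ≥0∞ := fun k s => ν k {s} with hwdef
  have hνw : ∀ k, ν k = dM (S k) (w k) := fun k => eq_dM _ _ (hcompl k)
  have pow_le : ∀ a b : ℝ≥0∞, a ^ (1 / p) ≤ b → a ≤ b ^ p := fun a b h => by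
    rw [one_div] at h
    exact (ENNReal.rpow_inv_le_iff hp0).1 h
  have hker : ∀ k, ∃ P : E → E → ℝ≥0∞, (∀ t, Measurable (P t)) ∧ (∀ x, ∑ t ∈ S k, P t x = 1) ∧
      (∀ t ∈ S k, ∑ s ∈ S (k + 1), w (k + 1) s * P t s = w k t) ∧
      (∑ s ∈ S (k + 1), ∑ t ∈ S k, w (k + 1) s * (P t s * edist s t ^ p) ≤ (c (k + 1) + c k) ^ p) := by
    intro k
    obtain ⟨q, hq1, hq2, hqc⟩ := glue (α := ν (k + 1)) (ν := μ) (β := ν k) hp (S k) (hS k) (hcompl k)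
      ((γ (k + 1)).map Prod.swap) (γ k)
      (by rw [Measure.map_map measurable_fst measurable_swap]; exact h2 _)
      (by rw [Measure.map_map measurable_snd measurable_swap]; exact h1 _)
      (h1 k) (h2 k)
    rw [lintegral_map (measurable_edistp p) measurable_swap] at hqc
    simp only [Prod.fst_swap, Prod.snd_swap] at hqc
    simp only [edist_comm (Prod.snd _)] at hqc
    obtain ⟨P, hPm, hP1, hintg⟩ := disint (S k) (hS k) (hcompl k) q hq1 hq2
    refine ⟨P, hPm, hP1, fun t ht => ?_, ?_⟩
    · have := disint_mass (S k) q hq2 P hintg t ht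
      rw [hνw (k + 1), lintegral_dM _ _ (hPm t)] at this
      exact this
    · have hle := pow_le _ _ (hqc.trans (add_le_add (hc _) (hc _)))
      rw [hintg _ (measurable_edistp p)] at hle
      refine le_trans (le_of_eq ?_) hle
      rw [Finset.sum_comm]
      refine Finset.sum_congr rfl fun t _ => ?_
      have : Measurable fun x => P t x * edist x t ^ p :=
        (hPm t).mul ((measurable_edistp p).comp (by fun_prop : Measurable fun x : E => (x, t)))
      rw [hνw (k + 1), lintegral_dM _ _ this]
  choose P hPm hP1 hPw hPc using hker
  obtain ⟨g, hg, hg1, hgint⟩ := disint (S K) (hS K) (hcompl K) (γ K) (h1 K) (h2 K)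
  have hgw := disint_mass (S K) (γ K) (h2 K) g hgint
  have hw4 : ∀ k, ∀ s ∈ S k, ((4 : ℝ≥0∞) ^ k)⁻¹ ≤ w k s := fun k s hs => by
    have := emp_ge _ (x k) s hs
    simpa using this
  have hS0 : ∃ s0, S 0 = {s0} ∧ w 0 s0 = 1 := by
    refine ⟨x 0 ⟨0, by positivity⟩, ?_, ?_⟩
    · ext s
      simp only [hSdef, Finset.mem_image, Finset.mem_univ, true_and, Finset.mem_singleton]
      constructor
      · rintro ⟨i, rfl⟩
        congr 1
        ext
        have := i.2
        simp only [pow_zero] at this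
        simp only
        omega
      · rintro rfl; exact ⟨_, rfl⟩
    · refine le_antisymm prob_le_one ?_
      have := hw4 0 (x 0 ⟨0, by positivity⟩) (Finset.mem_image_of_mem _ (Finset.mem_univ _))
      simpa using this
  obtain ⟨G, hGm, hGW, hGL⟩ := chain hp μ n hn S hS w hw4 (fun k s _ => measure_ne_top _ _) hS0
    P hPm hP1 hPw (fun k => c (k + 1) + c k) hPc K g hg hg1 hgw
  have hdm : ∀ s, Measurable fun y : E => g s y * edist y s ^ p := fun s =>
    (hg s).mul ((measurable_edistp p).comp (by fun_prop : Measurable fun x : E => (x, s)))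
  set A : (Fin n → E) → ℝ≥0∞ := fun X => ∑ s ∈ S K, (n : ℝ≥0∞)⁻¹ * ∑ j, g s (X j) * edist (X j) s ^ p
    with hA
  have hAm1 : ∀ s, ∀ j : Fin n, Measurable fun X : Fin n → E => g s (X j) * edist (X j) s ^ p := fun s j =>
    (hdm s).comp (measurable_pi_apply j)
  have hAm2 : ∀ s, Measurable fun X : Fin n → E => ∑ j, g s (X j) * edist (X j) s ^ p := fun s =>
    Finset.measurable_fun_sum _ fun j _ => hAm1 s j
  have hAm : Measurable A := Finset.measurable_fun_sum _ fun s _ => (hAm2 s).const_mul _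
  have hAint : ∫⁻ X, A X ∂(sampleMeasure μ n) ≤ c K ^ p := by
    refine le_trans (le_of_eq ?_) (pow_le _ _ (hc K))
    rw [hgint _ (measurable_edistp p), hA, lintegral_finsetSum _ fun s _ => (hAm2 s).const_mul _]
    refine Finset.sum_congr rfl fun s _ => ?_
    rw [lintegral_const_mul _ (hAm2 s), lintegral_finsetSum _ fun j _ => hAm1 s j]
    have : ∀ j : Fin n, ∫⁻ X : Fin n → E, g s (X j) * edist (X j) s ^ p ∂(sampleMeasure μ n) =
        ∫⁻ y, g s y * edist y s ^ p ∂μ := fun j =>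
      (measurePreserving_eval (fun _ : Fin n => μ) j).lintegral_comp (hdm s)
    simp only [this]
    rw [Finset.sum_const, Finset.card_univ, Fintype.card_fin, nsmul_eq_mul, ← mul_assoc,
      ENNReal.inv_mul_cancel hn0 (ENNReal.natCast_ne_top n), one_mul]
  have : IsProbabilityMeasure (sampleMeasure μ n) := by rw [sampleMeasure]; infer_instance
  have hgle : ∀ s ∈ S K, ∀ x, g s x ≤ 1 := fun s hs x => by
    rw [← hg1 x]; exact Finset.single_le_sum (f := fun t => g t x) (fun _ _ => zero_le) hs
  have hpt : ∀ X : Fin n → E, Wp p (empiricalMeasure n X) μ ≤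
      A X ^ (1 / p) + ((c K ^ p) ^ (1 / p) + G X) := by
    intro X
    set ρ : E → ℝ≥0∞ := fun s => (n : ℝ≥0∞)⁻¹ * ∑ j, g s (X j) with hρ
    have hρf : ∀ s ∈ S K, ρ s ≠ ∞ := by
      intro s hs
      refine (ENNReal.mul_lt_top (by simpa using hn0.bot_lt) (ENNReal.sum_lt_top.2 fun j _ => ?_)).ne
      exact (hgle s hs _).trans_lt ENNReal.one_lt_top
    have e1 : Wp p (empiricalMeasure n X) (dM (S K) ρ) ≤ A X ^ (1 / p) := by
      have h := Wp_push (p := p) (empiricalMeasure n X) (S K) g hg hg1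
      simp only [lintegral_emp n X (hg _), lintegral_emp n X (hdm _)] at h
      exact h
    have e2 : Wp p (dM (S K) ρ) (ν K) ≤ G X := by
      refine le_trans ?_ (hGW X)
      rw [hνw K]
      have a1 : dM (S K) ρ = dM (S K) (fun s => (ρ s - w K s) + min (ρ s) (w K s)) :=
        dM_congr _ _ _ fun s _ => (tsub_add_min).symm
      have a2 : dM (S K) (w K) = dM (S K) (fun s => (w K s - ρ s) + min (ρ s) (w K s)) :=
        dM_congr _ _ _ fun s _ => by rw [min_comm, tsub_add_min]
      rw [a1, a2, dM_add, dM_add]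
      exact Wp_add_le hp _ _ _
    have e3 : Wp p μ (ν K) ≤ c K := (Wp_le (γ K) (h1 K) (h2 K)).trans (hc K)
    have : IsFiniteMeasure (dM (S K) ρ) := dM_finite _ _ hρf
    have e4 : Wp p (empiricalMeasure n X) (ν K) ≤ A X ^ (1 / p) + G X :=
      (Wp_triangle (ν := dM (S K) ρ) hp (S K) (hS K) (hcompl K)).trans (add_le_add e1 e2)
    have e5 : Wp p μ (empiricalMeasure n X) ≤ c K + (A X ^ (1 / p) + G X) := by
      refine (Wp_triangle (ν := ν K) hp (Finset.univ.image X) ?_ (emp_compl n X)).trans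
        (add_le_add e3 (by rw [Wp_symm]; exact e4))
      exact ⟨X ⟨0, hn⟩, Finset.mem_image_of_mem _ (Finset.mem_univ _)⟩
    rw [Wp_symm, ← ENNReal.rpow_mul, mul_one_div_cancel hp0.ne', ENNReal.rpow_one]
    refine e5.trans (le_of_eq ?_)
    ring
  have hcp : (c K ^ p) ^ (1 / p) = c K := by
    rw [← ENNReal.rpow_mul, mul_one_div_cancel hp0.ne', ENNReal.rpow_one]
  have hfin := Lp_add3 (m := sampleMeasure μ n) hp _ A (fun _ => c K ^ p) G hAm measurable_const hGm hpt
  rw [expWpPow]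
  refine hfin.trans ?_
  rw [lintegral_const, measure_univ, mul_one, hcp, two_mul, add_assoc]
  gcongr
  rw [← hcp]
  exact ENNReal.rpow_le_rpow hAint (by positivity)

lemma part_one {p : ℝ} (hp : 1 ≤ p) (μ : Measure E) [IsProbabilityMeasure μ] (n : ℕ) :
    unifQuantErr p n μ ≤ expWpPow p μ n := by
  have hp0 : 0 < p := by linarith
  have : IsProbabilityMeasure (sampleMeasure μ n) := by rw [sampleMeasure]; infer_instance
  rw [expWpPow]
  calc unifQuantErr p n μ = (∫⁻ _X, (unifQuantErr p n μ) ^ p ∂(sampleMeasure μ n)) ^ (1 / p) := by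
        rw [lintegral_const, measure_univ, mul_one, ← ENNReal.rpow_mul, mul_one_div_cancel hp0.ne', ENNReal.rpow_one]
    _ ≤ _ := by
        refine ENNReal.rpow_le_rpow (lintegral_mono fun X => ENNReal.rpow_le_rpow ?_ hp0.le) (by positivity)
        rw [Wp_symm]
        exact iInf_le _ X

lemma asymp (p : ℝ) (hp : 1 ≤ p) (β : ℝ) (hβ0 : 0 ≤ β) (hβ : β < 1 / (2 * p))
    (c : ℕ → ℝ) (hc0 : ∀ k, 0 ≤ c k) (L : ℝ) (hL : 0 < L) (k0 : ℕ)
    (hc : ∀ k, k0 ≤ k → c k ≤ L * (((4 : ℝ) ^ β) ^ k)⁻¹) :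
    ∀ᶠ n : ℕ in atTop, 1 ≤ n ∧ ∃ K : ℕ, (n : ℝ) ^ β * (2 * c K + ∑ k ∈ Finset.range K,
      2 * ((2 ^ (k + 1) / √n) ^ (1 / p) * (c (k + 1) + c k))) ≤ 10 / (1 / (2 * p) - β) * L := by
  have hp0 : 0 < p := by linarith
  set a := 1 / (2 * p) with ha
  have ha2 : a ≤ 1 / 2 := by
    rw [ha]; exact one_div_le_one_div_of_le (by norm_num) (by linarith)
  set δ := a - β with hδ
  have hδ0 : 0 < δ := by linarith
  have hδ2 : δ ≤ 1 / 2 := by linarith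
  set q := (4 : ℝ) ^ β with hq
  set t := (4 : ℝ) ^ a with ht
  set θ := (4 : ℝ) ^ δ with hθ
  have hq0 : 0 < q := by positivity
  have ht0 : 0 < t := by positivity
  have hθ0 : 0 < θ := by positivity
  have htq : t = θ * q := by rw [ht, hθ, hq, ← Real.rpow_add (by norm_num)]; congr 1; rw [hδ]; ring
  have hq2 : q ≤ 2 := by
    have : q ≤ (4 : ℝ) ^ (1 / 2 : ℝ) := Real.rpow_le_rpow_of_exponent_le (by norm_num) (by linarith)
    rw [← Real.sqrt_eq_rpow] at this
    rwa [show (4 : ℝ) = 2 ^ 2 by norm_num, Real.sqrt_sq (by norm_num)] at this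
  have hbern : 1 ≤ θ * (1 - δ) := by
    have h := rpow_one_add_le_one_add_mul_self (s := -1 / 2) (p := 2 * δ) (by norm_num)
      (by linarith) (by linarith)
    have e : (1 + -1 / 2 : ℝ) ^ (2 * δ) = θ⁻¹ := by
      rw [Real.rpow_mul (by norm_num), hθ, ← Real.inv_rpow (by norm_num)]
      norm_num
    rw [e] at h
    have h' : θ⁻¹ ≤ 1 - δ := by linarith
    calc 1 = θ * θ⁻¹ := by field_simp
      _ ≤ _ := by gcongr
  have hgeo : ∀ K : ℕ, ∑ k ∈ Finset.range K, θ ^ (k + 1) ≤ θ ^ K / δ := by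
    intro K
    induction K with
    | zero => simp; positivity
    | succ K ih =>
      rw [Finset.sum_range_succ]
      have h1 : θ ^ K / δ + θ ^ (K + 1) ≤ θ ^ (K + 1) / δ := by
        rw [div_add' _ _ _ hδ0.ne']
        gcongr
        have : 0 ≤ θ ^ K * (θ * (1 - δ) - 1) := mul_nonneg (by positivity) (by linarith)
        rw [pow_succ]; nlinarith
      linarith
  set d : ℕ → ℝ := fun k => if k < k0 then c k else 0 with hd
  have hd0 : ∀ k, 0 ≤ d k := fun k => by simp only [hd]; split_ifs; exacts [hc0 k, le_rfl]
  have hcd : ∀ k, c k ≤ L * (q ^ k)⁻¹ + d k := by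
    intro k
    by_cases h : k < k0
    · simp only [hd, h, if_true]
      have : 0 ≤ L * (q ^ k)⁻¹ := by positivity
      linarith
    · simp only [hd, h, if_false]
      have := hc k (by omega)
      linarith
  set D := ∑ k ∈ Finset.range k0, t ^ (k + 1) * (d (k + 1) + d k) with hD
  have hDsum : ∀ K : ℕ, ∑ k ∈ Finset.range K, t ^ (k + 1) * (d (k + 1) + d k) ≤ D := by
    intro K
    rw [hD]
    have hz : ∀ k, k0 ≤ k → t ^ (k + 1) * (d (k + 1) + d k) = 0 := by
      intro k hk
      simp [hd, show ¬ k < k0 by omega, show ¬ k + 1 < k0 by omega]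
    have hnn : ∀ k, 0 ≤ t ^ (k + 1) * (d (k + 1) + d k) := fun k =>
      mul_nonneg (by positivity) (add_nonneg (hd0 _) (hd0 _))
    rcases le_total K k0 with h | h
    · exact Finset.sum_le_sum_of_subset_of_nonneg (Finset.range_mono h) (fun i _ _ => hnn i)
    · refine le_of_eq (Finset.sum_subset (Finset.range_mono h) fun i _ hi => ?_).symm
      exact hz i (by simpa using hi)
  have hsum : ∀ K : ℕ, ∑ k ∈ Finset.range K, t ^ (k + 1) * (c (k + 1) + c k) ≤
      L * (1 + q) * (θ ^ K / δ) + D := by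
    intro K
    calc ∑ k ∈ Finset.range K, t ^ (k + 1) * (c (k + 1) + c k)
        ≤ ∑ k ∈ Finset.range K, (L * (1 + q) * θ ^ (k + 1) + t ^ (k + 1) * (d (k + 1) + d k)) := by
          refine Finset.sum_le_sum fun k _ => ?_
          have e : t ^ (k + 1) * (L * (q ^ (k + 1))⁻¹ + L * (q ^ k)⁻¹) = L * (1 + q) * θ ^ (k + 1) := by
            rw [htq, mul_pow]; field_simp; ring
          rw [← e, ← mul_add]
          refine mul_le_mul_of_nonneg_left ?_ (by positivity)
          linarith [hcd k, hcd (k + 1)]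
      _ = L * (1 + q) * ∑ k ∈ Finset.range K, θ ^ (k + 1) +
          ∑ k ∈ Finset.range K, t ^ (k + 1) * (d (k + 1) + d k) := by
          rw [Finset.sum_add_distrib, Finset.mul_sum]
      _ ≤ _ := by
          refine add_le_add (mul_le_mul_of_nonneg_left (hgeo K) (by positivity)) (hDsum K)
  have htend : Tendsto (fun n : ℕ => D * (n : ℝ) ^ (-δ)) atTop (nhds 0) := by
    have := ((tendsto_rpow_neg_atTop hδ0).comp tendsto_natCast_atTop_atTop).const_mul D
    simpa using this
  have hev := htend.eventually (ge_mem_nhds (show (0 : ℝ) < L / δ by positivity))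
  filter_upwards [hev, eventually_ge_atTop (4 ^ k0)] with n hn hn4
  have hn1 : 1 ≤ n := le_trans (Nat.one_le_pow _ _ (by norm_num)) hn4
  refine ⟨hn1, Nat.log 4 n, ?_⟩
  set K := Nat.log 4 n with hK
  have hK1 : (4 : ℝ) ^ K ≤ n := by exact_mod_cast Nat.pow_log_le_self 4 (by omega)
  have hK2 : (n : ℝ) ≤ 4 ^ (K + 1) := by
    exact_mod_cast (Nat.lt_pow_succ_log_self (by norm_num : 1 < 4) n).le
  have hKk : k0 ≤ K := (Nat.le_log_iff_pow_le (by norm_num) (by omega)).2 hn4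
  have hn0 : (0 : ℝ) < n := by exact_mod_cast hn1
  have powK : ∀ (b : ℝ) (j : ℕ), ((4 : ℝ) ^ b) ^ j = ((4 : ℝ) ^ j) ^ b := by
    intro b j
    rw [← Real.rpow_natCast, ← Real.rpow_natCast, ← Real.rpow_mul (by norm_num), ← Real.rpow_mul (by norm_num),
      mul_comm]
  have hr : ∀ k : ℕ, ((2 : ℝ) ^ (k + 1) / √n) ^ (1 / p) = t ^ (k + 1) * (n : ℝ) ^ (-a) := by
    intro k
    rw [ht, powK, Real.rpow_neg hn0.le, ← div_eq_mul_inv, ← Real.div_rpow (by positivity) hn0.le]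
    have e : (2 : ℝ) ^ (k + 1) / √n = ((4 : ℝ) ^ (k + 1) / n) ^ (1 / 2 : ℝ) := by
      rw [← Real.sqrt_eq_rpow, Real.sqrt_div (by positivity)]
      congr 1
      rw [show (4 : ℝ) ^ (k + 1) = (2 ^ (k + 1)) ^ 2 by rw [← pow_mul, mul_comm, pow_mul]; norm_num]
      rw [Real.sqrt_sq (by positivity)]
    rw [e, ← Real.rpow_mul (by positivity)]
    congr 1
    rw [ha]; field_simp
  have hs := hsum K
  have hθK : θ ^ K ≤ (n : ℝ) ^ δ := by
    rw [hθ, powK]; exact Real.rpow_le_rpow (by positivity) hK1 hδ0.le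
  have hnβ : (n : ℝ) ^ β ≤ q ^ (K + 1) := by
    rw [hq, powK]; exact Real.rpow_le_rpow hn0.le hK2 hβ0
  have hfirst : (n : ℝ) ^ β * c K ≤ 2 * L := by
    calc (n : ℝ) ^ β * c K ≤ q ^ (K + 1) * (L * (q ^ K)⁻¹) :=
          mul_le_mul hnβ (hc K hKk) (hc0 K) (by positivity)
      _ = q * L := by rw [pow_succ]; field_simp
      _ ≤ _ := by gcongr
  have hnn : (n : ℝ) ^ β * (n : ℝ) ^ (-a) = (n : ℝ) ^ (-δ) := by
    rw [← Real.rpow_add hn0]; congr 1; rw [hδ]; ring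
  have hnδ : (n : ℝ) ^ (-δ) * (n : ℝ) ^ δ = 1 := by
    rw [← Real.rpow_add hn0]; simp
  have hrew : (n : ℝ) ^ β * (2 * c K + ∑ k ∈ Finset.range K,
      2 * ((2 ^ (k + 1) / √n) ^ (1 / p) * (c (k + 1) + c k))) =
      2 * ((n : ℝ) ^ β * c K) + 2 * ((n : ℝ) ^ (-δ) *
        ∑ k ∈ Finset.range K, t ^ (k + 1) * (c (k + 1) + c k)) := by
    simp only [hr]
    rw [← hnn, ← Finset.mul_sum]
    have : ∑ k ∈ Finset.range K, t ^ (k + 1) * (n : ℝ) ^ (-a) * (c (k + 1) + c k) =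
        (n : ℝ) ^ (-a) * ∑ k ∈ Finset.range K, t ^ (k + 1) * (c (k + 1) + c k) := by
      rw [Finset.mul_sum]; refine Finset.sum_congr rfl fun k _ => by ring
    rw [this]; ring
  rw [hrew]
  have hsec : (n : ℝ) ^ (-δ) * ∑ k ∈ Finset.range K, t ^ (k + 1) * (c (k + 1) + c k) ≤ 4 * (L / δ) := by
    calc (n : ℝ) ^ (-δ) * ∑ k ∈ Finset.range K, t ^ (k + 1) * (c (k + 1) + c k)
        ≤ (n : ℝ) ^ (-δ) * (L * (1 + 2) * ((n : ℝ) ^ δ / δ) + D) := by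
          refine mul_le_mul_of_nonneg_left (hs.trans ?_) (by positivity)
          gcongr
      _ = 3 * (L / δ) * ((n : ℝ) ^ (-δ) * (n : ℝ) ^ δ) + D * (n : ℝ) ^ (-δ) := by ring
      _ ≤ _ := by rw [hnδ]; linarith
  have hLδ : 2 * L ≤ L / δ := by
    rw [le_div_iff₀ hδ0]; nlinarith
  calc _ ≤ 2 * (2 * L) + 2 * (4 * (L / δ)) := by gcongr
    _ ≤ 10 * (L / δ) := by linarith
    _ = _ := by ring

end helpers

/-- **Corollary (main2corollary, part 2).** Let `(E, d_E)` be a separable metric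
space, `p ≥ 1` and `μ ∈ 𝒫_p(E)`. For every `0 ≤ β < 1/(2p)`:
`limsup n^β b_{n,p}(μ) ≤ limsup n^β (𝔼[W_p(μ_n,μ)^p])^{1/p}
  ≤ (10/(1/(2p) − β)) · limsup n^β b_{n,p}(μ)`. -/
theorem stmt_4 {E : Type*} [MetricSpace E] [TopologicalSpace.SeparableSpace E]
    [MeasurableSpace E] [BorelSpace E]
    (p : ℝ) (hp : 1 ≤ p)
    (μ : Measure E) [IsProbabilityMeasure μ] (hμ : HasFiniteMoment p μ)
    (β : ℝ) (hβ0 : 0 ≤ β) (hβ : β < 1 / (2 * p)) :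
    Filter.limsup (fun n : ℕ => ENNReal.ofReal ((n : ℝ) ^ β) * unifQuantErr p n μ)
        Filter.atTop
      ≤ Filter.limsup (fun n : ℕ => ENNReal.ofReal ((n : ℝ) ^ β) * expWpPow p μ n)
          Filter.atTop ∧
    Filter.limsup (fun n : ℕ => ENNReal.ofReal ((n : ℝ) ^ β) * expWpPow p μ n)
        Filter.atTop
      ≤ ENNReal.ofReal (10 / (1 / (2 * p) - β)) *
          Filter.limsup (fun n : ℕ => ENNReal.ofReal ((n : ℝ) ^ β) * unifQuantErr p n μ)
            Filter.atTop := by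
  have hp0 : 0 < p := by linarith
  have hδ0 : 0 < 1 / (2 * p) - β := by linarith
  refine ⟨limsup_le_limsup (Eventually.of_forall fun n => mul_le_mul_right (part_one hp μ n) _), ?_⟩
  set δ := 1 / (2 * p) - β with hδ
  set L := Filter.limsup (fun n : ℕ => ENNReal.ofReal ((n : ℝ) ^ β) * unifQuantErr p n μ)
            Filter.atTop with hL
  have hC0 : ENNReal.ofReal (10 / δ) ≠ 0 := by
    rw [Ne, ENNReal.ofReal_eq_zero, not_le]; positivity
  by_cases hLtop : L = ∞
  · rw [hLtop, ENNReal.mul_top hC0]; exact le_top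
  have main : ∀ l : ℝ, 0 < l → L < ENNReal.ofReal l →
      Filter.limsup (fun n : ℕ => ENNReal.ofReal ((n : ℝ) ^ β) * expWpPow p μ n) Filter.atTop
        ≤ ENNReal.ofReal (10 / δ * l) := by
    intro l hl hLl
    have hev := eventually_lt_of_limsup_lt hLl
    obtain ⟨N, hN⟩ := eventually_atTop.1 hev
    obtain ⟨x₀, hx₀⟩ := hμ
    have hex : ∀ k : ℕ, ∃ (x : Fin (4 ^ k) → E) (γ : Measure (E × E)) (c : ℝ),
        γ.map Prod.fst = μ ∧ γ.map Prod.snd = empiricalMeasure (4 ^ k) x ∧ 0 ≤ c ∧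
        (∫⁻ z, edist z.1 z.2 ^ p ∂γ) ^ (1 / p) ≤ ENNReal.ofReal c ∧
        (N ≤ k → c ≤ l * (((4 : ℝ) ^ β) ^ k)⁻¹) := by
      intro k
      by_cases hk : N ≤ k
      · have h4k : N ≤ 4 ^ k := hk.trans (Nat.lt_pow_self (by norm_num)).le
        have h := hN (4 ^ k) h4k
        have e : (((4 ^ k : ℕ) : ℝ)) ^ β = ((4 : ℝ) ^ β) ^ k := by
          push_cast
          rw [← Real.rpow_natCast, ← Real.rpow_natCast, ← Real.rpow_mul (by norm_num),
            ← Real.rpow_mul (by norm_num), mul_comm]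
        rw [e] at h
        have hq : 0 < ((4 : ℝ) ^ β) ^ k := by positivity
        have h' : unifQuantErr p (4 ^ k) μ < ENNReal.ofReal (l * (((4 : ℝ) ^ β) ^ k)⁻¹) := by
          rw [← div_eq_mul_inv, ENNReal.ofReal_div_of_pos hq]
          rw [ENNReal.lt_div_iff_mul_lt (Or.inl (by simpa using hq)) (Or.inl ENNReal.ofReal_ne_top)]
          rwa [mul_comm]
        rw [unifQuantErr, iInf_lt_iff] at h'
        obtain ⟨x, hx⟩ := h'
        obtain ⟨γ, h1, h2, h3⟩ := exists_of_Wp_lt hx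
        exact ⟨x, γ, _, h1, h2, by positivity, h3.le, fun _ => le_rfl⟩
      · have hm : Measurable fun y : E => (y, x₀) := by fun_prop
        refine ⟨fun _ => x₀, μ.map (fun y => (y, x₀)), ((∫⁻ y, edist y x₀ ^ p ∂μ) ^ (1 / p)).toReal,
          ?_, ?_, ENNReal.toReal_nonneg, ?_, fun h => absurd h hk⟩
        · rw [Measure.map_map measurable_fst hm]; exact Measure.map_id
        · rw [Measure.map_map measurable_snd hm]
          refine Measure.ext_of_lintegral _ fun f hf => ?_
          rw [lintegral_emp _ _ hf, lintegral_map hf (by exact measurable_const)]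
          simp [← mul_assoc, ENNReal.inv_mul_cancel]
        · rw [ENNReal.ofReal_toReal (ENNReal.rpow_ne_top_of_nonneg (by positivity) hx₀),
            lintegral_map (measurable_edistp p) hm]
    choose x γ c h1 h2 hc0 hcc hcl using hex
    have has := asymp p hp β hβ0 hβ c hc0 l hl N hcl
    refine limsup_le_of_le (by isBoundedDefault) ?_
    filter_upwards [has] with n hn
    obtain ⟨hn1, K, hK⟩ := hn
    have hb := main_bound hp μ n hn1 x γ h1 h2 (fun k => ENNReal.ofReal (c k)) hcc K
    have hconv : 2 * ENNReal.ofReal (c K) + ∑ k ∈ Finset.range K,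
        2 * (ENNReal.ofReal (2 ^ (k + 1) / √n) ^ (1 / p) * (ENNReal.ofReal (c (k + 1)) + ENNReal.ofReal (c k)))
        = ENNReal.ofReal (2 * c K + ∑ k ∈ Finset.range K,
          2 * ((2 ^ (k + 1) / √n) ^ (1 / p) * (c (k + 1) + c k))) := by
      have hnn : ∀ k, 0 ≤ 2 * (((2 : ℝ) ^ (k + 1) / √n) ^ (1 / p) * (c (k + 1) + c k)) := fun k =>
        mul_nonneg (by norm_num) (mul_nonneg (by positivity) (add_nonneg (hc0 _) (hc0 _)))
      rw [ENNReal.ofReal_add (mul_nonneg (by norm_num) (hc0 K)) (Finset.sum_nonneg fun k _ => hnn k),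
        ENNReal.ofReal_sum_of_nonneg fun k _ => hnn k, ENNReal.ofReal_mul (by norm_num), ENNReal.ofReal_ofNat]
      congr 1
      refine Finset.sum_congr rfl fun k _ => ?_
      rw [ENNReal.ofReal_mul (by norm_num), ENNReal.ofReal_ofNat, ENNReal.ofReal_mul (by positivity),
        ENNReal.ofReal_add (hc0 _) (hc0 _), ENNReal.ofReal_rpow_of_nonneg (by positivity) (by positivity)]
    rw [hconv] at hb
    calc ENNReal.ofReal ((n : ℝ) ^ β) * expWpPow p μ n ≤ _ := mul_le_mul_right hb _
      _ = _ := (ENNReal.ofReal_mul (by positivity)).symm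
      _ ≤ _ := ENNReal.ofReal_le_ofReal hK
  refine ENNReal.le_of_forall_pos_le_add fun ε hε _ => ?_
  have hε' : (0 : ℝ) < ε := hε
  have hl0 : 0 < L.toReal + ε * δ / 10 := by
    have := ENNReal.toReal_nonneg (a := L)
    positivity
  refine (main (L.toReal + ε * δ / 10) hl0 ?_).trans (le_of_eq ?_)
  · rw [ENNReal.lt_ofReal_iff_toReal_lt hLtop]
    have : 0 < (ε : ℝ) * δ / 10 := by positivity
    linarith
  · have e : 10 / δ * (L.toReal + ε * δ / 10) = 10 / δ * L.toReal + ε := by field_simp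
    rw [e, ENNReal.ofReal_add (by positivity) hε'.le, ENNReal.ofReal_mul (by positivity),
      ENNReal.ofReal_toReal hLtop, ENNReal.ofReal_coe_nnreal]
end

section
/- Let (E,d_E) be a separable metric space, let p ≥ 1, let μ ∈ 𝒫_p(E) and let k ∈ ℕ ∪ {0}. Then b_{2^k,p}(μ)^p ≤ 2 · ∑_{j=0}^{k} inf_{q ∈ [p,∞)} 2^{(p/q − 1)(k − j)} · e_{2^j,q}(μ)^p. -/
open MeasureTheory ENNReal Filter

section helpers

variable {E : Type*} [MetricSpace E] [MeasurableSpace E]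

/-- Cost of transporting `ρ` to a sum of Dirac masses of weight `c`. -/
noncomputable def atomCost (p : ℝ) (c : ℝ≥0∞) (ρ : Measure E) : ℝ≥0∞ :=
  ⨅ (γ : Measure (E × E)) (M : Multiset E)
    (_ : γ.map Prod.fst = ρ ∧ γ.map Prod.snd = c • (M.map Measure.dirac).sum),
    ∫⁻ z, edist z.1 z.2 ^ p ∂γ

lemma atomCost_le {p : ℝ} {c : ℝ≥0∞} {ρ : Measure E} {γ : Measure (E × E)} {M : Multiset E}
    (h1 : γ.map Prod.fst = ρ) (h2 : γ.map Prod.snd = c • (M.map Measure.dirac).sum) :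
    atomCost p c ρ ≤ ∫⁻ z, edist z.1 z.2 ^ p ∂γ :=
  iInf_le_of_le γ <| iInf_le_of_le M <| iInf_le_of_le ⟨h1, h2⟩ le_rfl

lemma exists_nearest [BorelSpace E] (S : Finset E) (hS : S.Nonempty) :
    ∃ T : E → E, Measurable T ∧ (∀ x, T x ∈ S) ∧ ∀ x, ∀ s ∈ S, edist x (T x) ≤ edist x s := by
  obtain ⟨e, he⟩ := (S.countable_toSet).exists_eq_range hS
  have h1 : ∀ s : E, ∃ k, s ∈ S → e k = s := by
    intro s
    by_cases h : s ∈ S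
    · have : s ∈ Set.range e := he ▸ h
      obtain ⟨k, hk⟩ := this
      exact ⟨k, fun _ => hk⟩
    · exact ⟨0, fun h' => absurd h' h⟩
  choose g hg using h1
  refine ⟨SimpleFunc.nearestPt e (S.sup g), SimpleFunc.measurable _, ?_, ?_⟩
  · intro x
    have : (SimpleFunc.nearestPt e (S.sup g)) x ∈ (S : Set E) := by
      rw [he]; exact ⟨_, rfl⟩
    exact this
  · intro x s hs
    have := SimpleFunc.edist_nearestPt_le e x (Finset.le_sup (f := g) hs)
    rw [hg s hs] at this
    rwa [edist_comm, edist_comm x s]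

lemma exists_floor_weight (a c : ℝ≥0∞) (ha : a ≠ ∞) (hc0 : c ≠ 0) (hc : c ≠ ∞) :
    ∃ m : ℕ, ∃ θ : ℝ≥0∞, θ ≤ 1 ∧ θ * a = m * c ∧ a < (m + 1) * c := by
  have hac : a / c ≠ ∞ := ENNReal.div_ne_top ha hc0
  set r := (a / c).toReal with hr
  have hr0 : 0 ≤ r := ENNReal.toReal_nonneg
  have hrr : a / c = ENNReal.ofReal r := (ENNReal.ofReal_toReal hac).symm
  have haa : a = ENNReal.ofReal r * c := by
    rw [← hrr, ENNReal.div_mul_cancel hc0 hc]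
  have h1 : (⌊r⌋₊ : ℝ≥0∞) * c ≤ a := by
    rw [haa]
    gcongr
    rw [← ENNReal.ofReal_natCast]
    exact ENNReal.ofReal_le_ofReal (Nat.floor_le hr0)
  refine ⟨⌊r⌋₊, (⌊r⌋₊ : ℝ≥0∞) * c / a, ENNReal.div_le_of_le_mul (by simpa using h1), ?_, ?_⟩
  · by_cases h0 : a = 0
    · rw [h0] at h1 ⊢
      simp only [mul_zero]
      exact (le_antisymm h1 bot_le).symm
    · exact ENNReal.div_mul_cancel h0 ha
  · conv_lhs => rw [haa]
    refine ENNReal.mul_lt_mul_left hc0 hc ?_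
    have : ((⌊r⌋₊ : ℝ≥0∞) + 1) = ENNReal.ofReal ((⌊r⌋₊ : ℝ) + 1) := by
      rw [ENNReal.ofReal_add (by positivity) zero_le_one]; simp
    rw [this]
    exact (ENNReal.ofReal_lt_ofReal_iff (by positivity)).2 (Nat.lt_floor_add_one r)

lemma step [TopologicalSpace.SeparableSpace E] [BorelSpace E] (p : ℝ) (c : ℝ≥0∞)
    (hc0 : c ≠ 0) (hc : c ≠ ∞)
    (ρ : Measure E) (N : ℕ) (hN : ρ Set.univ = N * c) (S : Finset E) (hS : S.Nonempty)
    (T : E → E) (hT : Measurable T) (hTS : ∀ x, T x ∈ S) :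
    ∃ (ρ' : Measure E) (N' : ℕ), ρ' ≤ ρ ∧ ρ' Set.univ = N' * c ∧ N' < S.card ∧
      atomCost p c ρ ≤ ∫⁻ x, edist x (T x) ^ p ∂ρ + atomCost p c ρ' := by
  have hsec : SecondCountableTopology E := UniformSpace.secondCountable_of_separable E
  have hρfin : ρ Set.univ ≠ ∞ := by rw [hN]; exact ENNReal.mul_ne_top (by simp) hc
  have hafin : ∀ s, ρ (T ⁻¹' {s}) ≠ ∞ := fun s =>
    ne_top_of_le_ne_top hρfin (measure_mono (Set.subset_univ _))
  have hms : ∀ s, MeasurableSet (T ⁻¹' {s}) := fun s => hT (measurableSet_singleton s)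
  choose m θ hθ1 hθ hlt using fun s => exists_floor_weight (ρ (T ⁻¹' {s})) c (hafin s) hc0 hc
  set R : E → Measure E := fun s => ρ.restrict (T ⁻¹' {s}) with hR
  have hsum : ∑ s ∈ S, R s = ρ := by
    ext A hA
    simp only [hR, Measure.coe_finsetSum, Finset.sum_apply]
    have : ∀ s, (ρ.restrict (T ⁻¹' {s})) A = (ρ.restrict A) (T ⁻¹' {s}) := by
      intro s
      rw [Measure.restrict_apply hA, Measure.restrict_apply (hms s), Set.inter_comm]
    simp only [this]
    rw [sum_measure_preimage_singleton S (fun s _ => hms s)]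
    have : T ⁻¹' (S : Set E) = Set.univ := by ext x; simp [hTS x]
    rw [this]; simp
  have hRu : ∀ s, R s Set.univ = ρ (T ⁻¹' {s}) := by intro s; simp [hR]
  have hsplit : ∑ s ∈ S, θ s • R s + ∑ s ∈ S, (1 - θ s) • R s = ρ := by
    rw [← Finset.sum_add_distrib, ← hsum]
    refine Finset.sum_congr rfl fun s _ => ?_
    rw [← add_smul, add_tsub_cancel_of_le (hθ1 s), one_smul]
  set ρ' := ∑ s ∈ S, (1 - θ s) • R s with hρ'
  have hmass1 : (∑ s ∈ S, θ s • R s) Set.univ = ((∑ s ∈ S, m s : ℕ) : ℝ≥0∞) * c := by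
    simp only [Measure.coe_finsetSum, Finset.sum_apply, Measure.smul_apply, smul_eq_mul, hRu, hθ]
    push_cast
    rw [Finset.sum_mul]
  have hmass : ((∑ s ∈ S, m s : ℕ) : ℝ≥0∞) * c + ρ' Set.univ = N * c := by
    rw [← hmass1, ← hN, ← Measure.add_apply, hsplit]
  have hle : ∑ s ∈ S, m s ≤ N := by
    have : ((∑ s ∈ S, m s : ℕ) : ℝ≥0∞) * c ≤ N * c := by rw [← hmass]; exact le_self_add
    rw [ENNReal.mul_le_mul_iff_left hc0 hc] at this
    exact_mod_cast this
  have hltN : N < ∑ s ∈ S, m s + S.card := by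
    have h1 : (N : ℝ≥0∞) * c < ((∑ s ∈ S, m s + S.card : ℕ) : ℝ≥0∞) * c := by
      have h2 : (N : ℝ≥0∞) * c = ∑ s ∈ S, ρ (T ⁻¹' {s}) := by
        rw [← hN]
        conv_lhs => rw [← hsum]
        simp only [Measure.coe_finsetSum, Finset.sum_apply, hRu]
      have h3 : ((∑ s ∈ S, m s + S.card : ℕ) : ℝ≥0∞) * c = ∑ s ∈ S, ((m s : ℝ≥0∞) + 1) * c := by
        rw [← Finset.sum_mul, Finset.sum_add_distrib]
        simp
      rw [h2, h3]
      exact ENNReal.sum_lt_sum_of_nonempty hS fun s _ => hlt s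
    have := (ENNReal.mul_lt_mul_iff_left hc0 hc).1 h1
    exact_mod_cast this
  refine ⟨ρ', N - ∑ s ∈ S, m s, ?_, ?_, by omega, ?_⟩
  · rw [← hsplit]; exact Measure.le_add_left le_rfl
  · have h4 : ((∑ s ∈ S, m s : ℕ) : ℝ≥0∞) * c + ρ' Set.univ
        = ((∑ s ∈ S, m s : ℕ) : ℝ≥0∞) * c + ((N - ∑ s ∈ S, m s : ℕ) : ℝ≥0∞) * c := by
      rw [hmass, ← add_mul, ← Nat.cast_add, Nat.add_sub_cancel' hle]
    exact (ENNReal.add_right_inj (ENNReal.mul_ne_top (by simp) hc)).1 h4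
  · conv_rhs => unfold atomCost
    simp only [ENNReal.add_iInf]
    refine le_iInf fun γ => le_iInf fun M => le_iInf fun h => ?_
    have hpair : ∀ s : E, Measurable (fun x : E => (x, s)) := fun s => by fun_prop
    set γ0 : Measure (E × E) := ∑ s ∈ S, (θ s • R s).map (fun x => (x, s)) with hγ0
    have hf : (γ0 + γ).map Prod.fst = ρ := by
      rw [Measure.map_add _ _ measurable_fst, h.1, hγ0,
        Measure.map_finset_sum measurable_fst.aemeasurable]
      conv_rhs => rw [← hsplit]
      congr 1
      refine Finset.sum_congr rfl fun s _ => ?_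
      rw [Measure.map_map measurable_fst (hpair s)]
      exact Measure.map_id
    have hs : (γ0 + γ).map Prod.snd
        = c • ((∑ s ∈ S, Multiset.replicate (m s) s + M).map Measure.dirac).sum := by
      rw [Measure.map_add _ _ measurable_snd, h.2, hγ0,
        Measure.map_finset_sum measurable_snd.aemeasurable, Multiset.map_add, Multiset.sum_add,
        smul_add]
      congr 1
      have : Multiset.map (Measure.dirac : E → Measure E) (∑ s ∈ S, Multiset.replicate (m s) s)
          = ∑ s ∈ S, Multiset.replicate (m s) (Measure.dirac s) := by
        have := map_sum (Multiset.mapAddMonoidHom (Measure.dirac : E → Measure E))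
          (fun s => Multiset.replicate (m s) s) S
        simpa only [Multiset.coe_mapAddMonoidHom, Multiset.map_replicate] using this
      rw [this, Multiset.sum_sum, Finset.smul_sum]
      refine Finset.sum_congr rfl fun s _ => ?_
      rw [Measure.map_map measurable_snd (hpair s)]
      have : (Prod.snd ∘ fun x : E => (x, s)) = fun _ => s := rfl
      rw [this, Measure.map_const, Measure.smul_apply, hRu, smul_eq_mul, hθ,
        Multiset.sum_replicate, ← Nat.cast_smul_eq_nsmul ℝ≥0∞, smul_smul, mul_comm]
    refine (atomCost_le hf hs).trans ?_
    rw [lintegral_add_measure]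
    gcongr
    have hmeas : Measurable (fun z : E × E => edist z.1 z.2 ^ p) := by fun_prop
    rw [hγ0, lintegral_finsetSum_measure]
    conv_rhs => rw [← hsum]
    rw [lintegral_finsetSum_measure]
    refine Finset.sum_le_sum fun s _ => ?_
    rw [lintegral_map hmeas (hpair s), lintegral_smul_measure, smul_eq_mul]
    calc θ s * ∫⁻ x, edist x s ^ p ∂(R s) ≤ 1 * ∫⁻ x, edist x s ^ p ∂(R s) := by
          gcongr; exact hθ1 s
      _ = ∫⁻ x, edist x (T x) ^ p ∂(R s) := by
          rw [one_mul]
          refine setLIntegral_congr_fun (hms s) fun x hx => ?_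
          have : T x = s := hx
          simp only [this]

lemma quant_bound [TopologicalSpace.SeparableSpace E] [BorelSpace E] (p q : ℝ) (hp : 1 ≤ p)
    (hpq : p ≤ q) (μ ρ : Measure E) (hρ : ρ ≤ μ) (n : ℕ) (A B K : ℝ≥0∞)
    (hK0 : K ≠ 0) (hK : K ≠ ∞) (hm : ρ Set.univ ^ (1 - p / q) ≤ K)
    (h : ∀ (S : Finset E) (T : E → E), S.Nonempty → S.card ≤ n → Measurable T →
      (∀ x, T x ∈ S) → A ≤ ∫⁻ x, edist x (T x) ^ p ∂ρ + B) :
    A ≤ K * quantErr q n μ ^ p + B := by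
  have hsec : SecondCountableTopology E := UniformSpace.secondCountable_of_separable E
  have hp0 : 0 < p := by linarith
  have hq0 : 0 < q := by linarith
  rw [← tsub_le_iff_right, mul_comm, ← ENNReal.div_le_iff hK0 hK,
    ← ENNReal.rpow_inv_le_iff hp0]
  unfold quantErr Wp
  refine le_iInf₂ fun ν hν => le_iInf₂ fun γ hγ => ?_
  obtain ⟨hν1, S, hSn, hS0⟩ := hν
  have hSne : S.Nonempty := by
    rw [Finset.nonempty_iff_ne_empty]
    rintro rfl
    simp at hS0
  obtain ⟨T, hT, hTS, hTm⟩ := exists_nearest S hSne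
  rw [ENNReal.rpow_inv_le_iff hp0, ENNReal.div_le_iff hK0 hK, tsub_le_iff_right]
  refine (h S T hSne hSn hT hTS).trans ?_
  gcongr
  have hfm : Measurable (fun x => edist x (T x)) := measurable_id.edist hT
  have h1 := eLpNorm'_le_eLpNorm'_mul_rpow_measure_univ (μ := ρ) hp0 hpq
    hfm.aestronglyMeasurable
  simp only [eLpNorm', enorm_eq_self] at h1
  have h2 : ∫⁻ x, edist x (T x) ^ q ∂ρ ≤ ∫⁻ z, edist z.1 z.2 ^ q ∂γ := by
    calc ∫⁻ x, edist x (T x) ^ q ∂ρ ≤ ∫⁻ x, edist x (T x) ^ q ∂μ := lintegral_mono' hρ le_rfl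
      _ = ∫⁻ z, edist z.1 (T z.1) ^ q ∂γ := by
          rw [← hγ.1, lintegral_map (hfm.pow_const q) measurable_fst]
      _ ≤ _ := by
          refine lintegral_mono_ae ?_
          have : ∀ᵐ z ∂γ, z.2 ∈ S := by
            rw [← hγ.2, Measure.map_apply measurable_snd S.measurableSet.compl] at hS0
            exact hS0
          filter_upwards [this] with z hz
          exact ENNReal.rpow_le_rpow (hTm _ _ hz) hq0.le
  calc ∫⁻ x, edist x (T x) ^ p ∂ρ = ((∫⁻ x, edist x (T x) ^ p ∂ρ) ^ (1 / p)) ^ p := by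
        rw [← ENNReal.rpow_mul, one_div_mul_cancel hp0.ne', ENNReal.rpow_one]
    _ ≤ ((∫⁻ z, edist z.1 z.2 ^ q ∂γ) ^ (1 / q) * ρ Set.univ ^ (1 / p - 1 / q)) ^ p := by
        refine ENNReal.rpow_le_rpow (h1.trans ?_) hp0.le
        gcongr
    _ = ((∫⁻ z, edist z.1 z.2 ^ q ∂γ) ^ (1 / q)) ^ p * ρ Set.univ ^ (1 - p / q) := by
        rw [ENNReal.mul_rpow_of_nonneg _ _ hp0.le, ← ENNReal.rpow_mul (ρ Set.univ)]
        congr 2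
        field_simp
    _ ≤ _ := by gcongr

lemma main_ind [TopologicalSpace.SeparableSpace E] [BorelSpace E] (p : ℝ) (hp : 1 ≤ p)
    (μ : Measure E) (k j : ℕ) (ρ : Measure E) (N : ℕ) (hρ : ρ ≤ μ)
    (hN : ρ Set.univ = N * ((2 ^ k : ℕ) : ℝ≥0∞)⁻¹) (hNj : N < 2 ^ j) :
    atomCost p ((2 ^ k : ℕ) : ℝ≥0∞)⁻¹ ρ ≤
      ∑ i ∈ Finset.range j, 2 * ⨅ q ∈ Set.Ici p,
          ENNReal.ofReal ((2 : ℝ) ^ ((p / q - 1) * ((k : ℝ) - (i : ℝ)))) *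
            quantErr q (2 ^ i) μ ^ p := by
  induction j generalizing ρ N with
  | zero =>
    have : N = 0 := by simpa using hNj
    subst this
    have h0 : ρ = 0 := by simpa using hN
    subst h0
    refine (atomCost_le (γ := 0) (M := 0) (by simp) (by simp)).trans ?_
    simp
  | succ j ih =>
    rw [Finset.sum_range_succ, add_comm]
    set B := ∑ i ∈ Finset.range j, 2 * ⨅ q ∈ Set.Ici p,
          ENNReal.ofReal ((2 : ℝ) ^ ((p / q - 1) * ((k : ℝ) - (i : ℝ)))) *
            quantErr q (2 ^ i) μ ^ p with hB
    rw [ENNReal.mul_iInf_of_ne (by simp) (by simp), ENNReal.iInf_add]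
    refine le_iInf fun q => ?_
    rw [ENNReal.mul_iInf_of_ne (by simp) (by simp), ENNReal.iInf_add]
    refine le_iInf fun hq => ?_
    have hpq : p ≤ q := hq
    have hp0 : 0 < p := by linarith
    have hq0 : 0 < q := by linarith
    rw [← mul_assoc]
    refine quant_bound p q hp hpq μ ρ hρ (2 ^ j) _ B _ ?_ ?_ ?_ ?_
    · simp only [ne_eq, mul_eq_zero, OfNat.ofNat_ne_zero, ENNReal.ofReal_eq_zero, not_le, false_or]
      positivity
    · exact ENNReal.mul_ne_top (by simp) ENNReal.ofReal_ne_top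
    · have hpq1 : p / q ≤ 1 := (div_le_one hq0).2 hpq
      have hpq0 : 0 ≤ p / q := by positivity
      have hm : ρ Set.univ ≤ ENNReal.ofReal ((2 : ℝ) ^ ((j : ℝ) + 1 - k)) := by
        have e1 : ((2 ^ k : ℕ) : ℝ≥0∞)⁻¹ = ENNReal.ofReal (((2 : ℝ) ^ k)⁻¹) := by
          rw [ENNReal.ofReal_inv_of_pos (by positivity), ENNReal.ofReal_pow (by norm_num)]
          simp
        rw [hN, e1, ← ENNReal.ofReal_natCast, ← ENNReal.ofReal_mul (by positivity)]
        refine ENNReal.ofReal_le_ofReal ?_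
        rw [Real.rpow_sub (by norm_num), Real.rpow_natCast, ← div_eq_mul_inv]
        have : (N : ℝ) ≤ (2 : ℝ) ^ ((j : ℝ) + 1) := by
          have : ((j : ℝ) + 1) = ((j + 1 : ℕ) : ℝ) := by push_cast; rfl
          rw [this, Real.rpow_natCast]
          exact_mod_cast hNj.le
        gcongr
      calc ρ Set.univ ^ (1 - p / q)
          ≤ ENNReal.ofReal ((2 : ℝ) ^ ((j : ℝ) + 1 - k)) ^ (1 - p / q) :=
            ENNReal.rpow_le_rpow hm (by linarith)
        _ = ENNReal.ofReal ((2 : ℝ) ^ (((j : ℝ) + 1 - k) * (1 - p / q))) := by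
            rw [ENNReal.ofReal_rpow_of_pos (by positivity), ← Real.rpow_mul (by norm_num)]
        _ ≤ ENNReal.ofReal (2 * (2 : ℝ) ^ ((p / q - 1) * ((k : ℝ) - (j : ℝ)))) := by
            refine ENNReal.ofReal_le_ofReal ?_
            have : (2 : ℝ) * (2 : ℝ) ^ ((p / q - 1) * ((k : ℝ) - (j : ℝ)))
                = (2 : ℝ) ^ (1 + (p / q - 1) * ((k : ℝ) - (j : ℝ))) := by
              rw [Real.rpow_add (by norm_num), Real.rpow_one]
            rw [this]
            refine Real.rpow_le_rpow_of_exponent_le (by norm_num) ?_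
            nlinarith
        _ = _ := by rw [ENNReal.ofReal_mul (by norm_num)]; simp
    · intro S T hS hSc hT hTS
      obtain ⟨ρ', N', h1, h2, h3, h4⟩ := step p ((2 ^ k : ℕ) : ℝ≥0∞)⁻¹ (by simp) (by simp)
        ρ N hN S hS T hT hTS
      refine h4.trans ?_
      gcongr
      exact ih ρ' N' (h1.trans hρ) h2 (h3.trans_le hSc)

lemma unif_le [BorelSpace E] (p : ℝ) (hp : 1 ≤ p) (μ : Measure E) [IsProbabilityMeasure μ]
    (n : ℕ) (hn : n ≠ 0) : unifQuantErr p n μ ^ p ≤ atomCost p (n : ℝ≥0∞)⁻¹ μ := by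
  have hp0 : 0 < p := by linarith
  refine le_iInf fun γ => le_iInf fun M => le_iInf fun h => ?_
  have hcard : M.card = n := by
    have h1 : γ Set.univ = 1 := by
      have := congrArg (fun ν => ν Set.univ) h.1
      simpa [Measure.map_apply measurable_fst MeasurableSet.univ] using this
    have h2 := congrArg (fun ν => ν Set.univ) h.2
    have h3 : (M.map (Measure.dirac : E → Measure E)).sum Set.univ = M.card := by
      clear h h2
      induction M using Multiset.induction with
      | empty => simp
      | cons a M ih => simp [ih, add_comm]
    simp only [Measure.map_apply measurable_snd MeasurableSet.univ, Set.preimage_univ, h1,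
      Measure.smul_apply, h3, smul_eq_mul] at h2
    have h4 : (n : ℝ≥0∞) = M.card := by
      calc (n : ℝ≥0∞) = n * ((n : ℝ≥0∞)⁻¹ * M.card) := by rw [← h2, mul_one]
        _ = M.card := by
          rw [← mul_assoc, ENNReal.mul_inv_cancel (by exact_mod_cast hn) (by simp), one_mul]
    exact_mod_cast h4.symm
  have hlen : M.toList.length = n := by simpa using hcard
  rw [← ENNReal.le_rpow_inv_iff hp0]
  refine iInf_le_of_le (fun i : Fin n => M.toList.get (i.cast hlen.symm)) ?_
  refine iInf₂_le_of_le γ ⟨h.1, ?_⟩ (by rw [one_div])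
  rw [h.2, empiricalMeasure]
  congr 1
  conv_lhs => rw [← M.coe_toList]
  rw [Multiset.map_coe, Multiset.sum_coe]
  subst hlen
  rw [← List.sum_ofFn]
  congr 1
  refine List.ext_getElem (by simp) ?_
  intro i h1 h2
  simp

end helpers

/-- **Theorem (main3).** Let `(E, d_E)` be a separable metric space, `p ≥ 1`,
`μ ∈ 𝒫_p(E)` and `k ∈ ℕ ∪ {0}`. Then
`b_{2^k,p}(μ)^p ≤ 2 ∑_{j=0}^{k} inf_{q ∈ [p,∞)} 2^{(p/q − 1)(k−j)} e_{2^j,q}(μ)^p`. -/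
theorem stmt_5 {E : Type*} [MetricSpace E] [TopologicalSpace.SeparableSpace E]
    [MeasurableSpace E] [BorelSpace E]
    (p : ℝ) (hp : 1 ≤ p)
    (μ : Measure E) [IsProbabilityMeasure μ] (hμ : HasFiniteMoment p μ)
    (k : ℕ) :
    unifQuantErr p (2 ^ k) μ ^ p ≤
      2 * ∑ j ∈ Finset.range (k + 1),
        ⨅ q ∈ Set.Ici p,
          ENNReal.ofReal ((2 : ℝ) ^ ((p / q - 1) * ((k : ℝ) - (j : ℝ)))) *
            quantErr q (2 ^ j) μ ^ p := by
  have h := main_ind p hp μ k (k + 1) μ (2 ^ k) le_rfl (by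
    rw [ENNReal.mul_inv_cancel (by simp) (by simp)]; exact measure_univ)
    (Nat.pow_lt_pow_right (by norm_num) (Nat.lt_succ_self k))
  rw [Finset.mul_sum]
  exact (unif_le p hp μ (2 ^ k) (by positivity)).trans h
end
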